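/- arXiv:1104.0034 — 3 statements merged into one kernel-verified Lean document; each statement's English description precedes it below -/
import Mathlib

section
/- Let f be a transcendental entire function in the Eremenko–Lyubich class B, and assume there is a number R > 0 such that the iterates of f tend to infinity uniformly on the set {z ∈ P(f) : |z| ≥ R}, i.e. inf{|fⁿ(z)| : z ∈ P(f), |z| ≥ R} → ∞ as n → ∞. Let W be a wandering domain of f for which ∞ is a limit function (i.e. there is a sequence m_j → ∞ with |f^{m_j}(w)| → ∞ for w ∈ W), and let w ∈ W. Then there exist s ∈ S(f) and a sequence n_k → ∞ such that f^{n_k}(w) → s and f^{n_k−1}(w) → ∞. -/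
/-!
Formalization of: "Absence of wandering domains for functions in class B whose
singular values escape uniformly, under a thickness condition along an invariant set A."
-/

open Set Metric Filter Topology

/-- The chordal (spherical) distance between two finite points of the Riemann sphere. -/
noncomputable def sphericalDist (z w : ℂ) : ℝ :=
  2 * dist z w / (Real.sqrt (1 + ‖z‖ ^ 2) * Real.sqrt (1 + ‖w‖ ^ 2))

/-- A transcendental entire function: entire and not a polynomial. -/
def TranscendentalEntire (f : ℂ → ℂ) : Prop :=
  Differentiable ℂ f ∧ ¬∃ p : Polynomial ℂ, ∀ z : ℂ, f z = p.eval z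

/-- `S` is the set of singular values of `f`: the smallest closed set `S ⊆ ℂ` such that
`f : ℂ ∖ f⁻¹(S) → ℂ ∖ S` is a covering map. -/
def IsSingularValueSet (f : ℂ → ℂ) (S : Set ℂ) : Prop :=
  IsClosed S ∧ IsCoveringMapOn f Sᶜ ∧
    ∀ T : Set ℂ, IsClosed T → IsCoveringMapOn f Tᶜ → S ⊆ T

/-- The Fatou set of an entire function: points having a neighbourhood on which the family of
iterates is equicontinuous with respect to the spherical metric. -/
def FatouSet (f : ℂ → ℂ) : Set ℂ :=
  {z : ℂ | ∃ N : Set ℂ, IsOpen N ∧ z ∈ N ∧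
    ∀ x ∈ N, ∀ ε > (0 : ℝ), ∃ δ > (0 : ℝ), ∀ y ∈ N, dist y x < δ →
      ∀ n : ℕ, sphericalDist (f^[n] y) (f^[n] x) < ε}

/-- A wandering domain: a connected component `W` of the Fatou set whose forward images are
pairwise disjoint. -/
def IsWanderingDomain (f : ℂ → ℂ) (W : Set ℂ) : Prop :=
  (∃ z ∈ FatouSet f, W = connectedComponentIn (FatouSet f) z) ∧
    ∀ m n : ℕ, m ≠ n → f^[m] '' W ∩ f^[n] '' W = ∅


/-- The postsingular set `P(f)`: the closure of the union of the forward orbits of the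
singular values `S`. -/
def PostsingularSet (f : ℂ → ℂ) (S : Set ℂ) : Set ℂ :=
  closure (⋃ n : ℕ, f^[n] '' S)

/-- The inverse of a holomorphic local homeomorphism is holomorphic. -/
theorem differentiableAt_symm_of_holomorphic (e : OpenPartialHomeomorph ℂ ℂ)
    (he : DifferentiableOn ℂ e e.source) {y : ℂ} (hy : y ∈ e.target) :
    DifferentiableAt ℂ e.symm y := by
  have hana : AnalyticOnNhd ℂ e e.source := he.analyticOnNhd e.open_source
  have hx := e.map_target hy
  have hcont : ContinuousAt e.symm y := e.continuousAt_symm hy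
  have hne : ∀ᶠ x in 𝓝[≠] (e.symm y), deriv e x ≠ 0 := by
    refine (hana.deriv _ hx).eventually_eq_zero_or_eventually_ne_zero.resolve_left fun h0 ↦ ?_
    obtain ⟨δ, hδ, hball⟩ := Metric.eventually_nhds_iff_ball.1
      (h0.and (e.open_source.mem_nhds hx))
    have hconst : ∀ x ∈ ball (e.symm y) δ, e x = e (e.symm y) := fun x hxb ↦
      (convex_ball _ _).is_const_of_fderivWithin_eq_zero (𝕜 := ℂ)
        (he.mono fun z hz ↦ (hball z hz).2)
        (fun z hz ↦ by
          rw [fderivWithin_of_isOpen isOpen_ball hz]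
          ext
          simpa using! (hball z hz).1) hxb (mem_ball_self hδ)
    have hmem : e.symm y + (δ / 2 : ℝ) ∈ ball (e.symm y) δ := by
      simp only [mem_ball, dist_self_add_left, Complex.norm_real, Real.norm_eq_abs]
      rw [abs_of_pos (by positivity)]
      linarith
    have := e.injOn (hball _ hmem).2 hx (hconst _ hmem)
    have h2 : ((δ / 2 : ℝ) : ℂ) = 0 := by simpa using this
    have h3 : δ / 2 = 0 := by exact_mod_cast h2
    linarith
  refine (Complex.analyticAt_of_differentiable_on_punctured_nhds_of_continuousAt ?_
    hcont).differentiableAt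
  have htend : Tendsto e.symm (𝓝[≠] y) (𝓝[≠] (e.symm y)) := by
    refine tendsto_nhdsWithin_iff.2 ⟨hcont.tendsto.mono_left nhdsWithin_le_nhds, ?_⟩
    filter_upwards [self_mem_nhdsWithin, nhdsWithin_le_nhds (e.open_target.mem_nhds hy)]
      with z hz hzt h
    exact hz (e.symm.injOn hzt hy h)
  filter_upwards [htend.eventually hne, nhdsWithin_le_nhds (e.open_target.mem_nhds hy)]
    with z hz hzt
  exact (e.hasDerivAt_symm hzt hz
    (hana _ (e.map_target hzt)).differentiableAt.hasDerivAt).differentiableAt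

section Lifting

variable {p : ℂ → ℂ} {T U : Set ℂ}

/-- Holomorphic maps on convex open sets lift through entire covering maps. -/
theorem exists_holomorphic_lift (hp : Differentiable ℂ p) (hcov : IsCoveringMapOn p T)
    (hUo : IsOpen U) (hUc : Convex ℝ U) {h : ℂ → ℂ} (hh : DifferentiableOn ℂ h U)
    (hT : MapsTo h U T) {a e : ℂ} (ha : a ∈ U) (he : p e = h a) :
    ∃ φ : ℂ → ℂ, DifferentiableOn ℂ φ U ∧ φ a = e ∧ ∀ z ∈ U, p (φ z) = h z := by
  classical
  have : ContractibleSpace U := hUc.contractibleSpace ⟨a, ha⟩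
  have := hUo.locallyPathConnectedSpace
  obtain ⟨F, ⟨hFa, hF⟩, -⟩ := hcov.existsUnique_continuousMap_lifts (A := U)
    ⟨U.domRestrict h, continuousOn_iff_continuous_domRestrict.mp hh.continuousOn⟩
    (a₀ := ⟨a, ha⟩) (e₀ := e) he (fun x ↦ hT x.2)
  obtain ⟨φ, hφ⟩ : ∃ φ : ℂ → ℂ, ∀ z : U, φ z = F z :=
    ⟨fun z ↦ if hz : z ∈ U then F ⟨z, hz⟩ else 0, by simp⟩
  have hlift : ∀ z ∈ U, p (φ z) = h z := fun z hz ↦ by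
    simpa [hφ ⟨z, hz⟩] using congrFun hF ⟨z, hz⟩
  have hcont : ContinuousOn φ U := by
    rw [continuousOn_iff_continuous_domRestrict]
    convert! map_continuous F
    ext z
    exact hφ z
  refine ⟨φ, fun z hz ↦ DifferentiableAt.differentiableWithinAt ?_, by simpa [hφ ⟨a, ha⟩] using hFa,
    hlift⟩
  obtain ⟨e', he'z, he'p⟩ := hcov.isLocalHomeomorphOn (φ z)
    (show p (φ z) ∈ T from hlift z hz ▸ hT hz)
  have hsymm : DifferentiableAt ℂ e'.symm (h z) := by
    refine differentiableAt_symm_of_holomorphic e' (he'p ▸ hp.differentiableOn) ?_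
    rw [← hlift z hz, he'p]
    exact e'.map_source he'z
  refine (hsymm.comp z (hh.differentiableAt (hUo.mem_nhds hz))).congr_of_eventuallyEq ?_
  filter_upwards [hUo.mem_nhds hz, (hcont.continuousAt (hUo.mem_nhds hz)).eventually
    (e'.open_source.mem_nhds he'z)] with x hx hxs
  simp only [Function.comp_apply]
  rw [← hlift x hx, he'p, e'.left_inv hxs]

/-- Lifts through a covering map are determined by their value at one point. -/
theorem eqOn_of_lifts (hcov : IsCoveringMapOn p T) (hU : IsPreconnected U) {φ ψ : ℂ → ℂ}
    (hφ : ContinuousOn φ U) (hψ : ContinuousOn ψ U) (hT : ∀ z ∈ U, p (φ z) ∈ T)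
    (heq : ∀ z ∈ U, p (φ z) = p (ψ z)) {a : ℂ} (ha : a ∈ U) (hφψ : φ a = ψ a) : EqOn φ ψ U := by
  have : PreconnectedSpace U := isPreconnected_iff_preconnectedSpace.1 hU
  have hφ' := continuousOn_iff_continuous_domRestrict.1 hφ
  have hψ' := continuousOn_iff_continuous_domRestrict.1 hψ
  have key := hcov.isCoveringMap_restrictPreimage.eq_of_comp_eq (A := U)
    (g₁ := fun z ↦ ⟨φ z, hT z z.2⟩)
    (g₂ := fun z ↦ ⟨ψ z, show p (ψ z) ∈ T from (heq z z.2) ▸ hT z z.2⟩)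
    (hφ'.subtype_mk _) (hψ'.subtype_mk _) (by ext z; exact heq z z.2) ⟨a, ha⟩
    (Subtype.ext hφψ)
  intro z hz
  exact congrArg Subtype.val (congrFun key ⟨z, hz⟩)

end Lifting

/-- **Bloch's theorem** (with a non-optimal constant): the image of a disc under a holomorphic
map contains a disc whose radius is comparable to the derivative at the centre. -/
theorem exists_ball_subset_image {g : ℂ → ℂ} {z₀ : ℂ} {r : ℝ} (hr : 0 < r)
    (hg : DifferentiableOn ℂ g (ball z₀ r)) :
    ∃ c, ball c (r * ‖deriv g z₀‖ / 96) ⊆ g '' ball z₀ r := by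
  rcases eq_or_ne (deriv g z₀) 0 with h0 | h0
  · exact ⟨0, by simp [h0]⟩
  have hg' : DifferentiableOn ℂ (deriv g) (ball z₀ r) := hg.deriv isOpen_ball
  have hsub : closedBall z₀ (r / 2) ⊆ ball z₀ r := closedBall_subset_ball (by linarith)
  obtain ⟨z₁, hz₁, hmax⟩ := (isCompact_closedBall z₀ (r / 2)).exists_isMaxOn
    (nonempty_closedBall.2 (by positivity))
    (f := fun z ↦ ‖deriv g z‖ * (r / 2 - dist z z₀))
    ((hg'.continuousOn.mono hsub).norm.mul (by fun_prop))
  have hmax' : ∀ z ∈ closedBall z₀ (r / 2), ‖deriv g z‖ * (r / 2 - dist z z₀) ≤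
      ‖deriv g z₁‖ * (r / 2 - dist z₁ z₀) := fun z hz ↦ hmax hz
  set a := ‖deriv g z₁‖ with ha
  obtain ⟨d, hd⟩ : ∃ d, d = (r / 2 - dist z₁ z₀) / 2 := ⟨_, rfl⟩
  have hF0 : ‖deriv g z₀‖ * (r / 2) ≤ a * (2 * d) := by
    have := hmax' z₀ (mem_closedBall_self (by positivity))
    rw [dist_self, sub_zero] at this
    rwa [hd, mul_div_cancel₀ _ two_ne_zero]
  have hg0 : 0 < ‖deriv g z₀‖ := norm_pos_iff.2 h0
  have hd0 : 0 ≤ d := by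
    rw [hd]
    have := mem_closedBall.1 hz₁
    linarith
  have had : 0 < a * (2 * d) := lt_of_lt_of_le (by positivity) hF0
  have ha0 : 0 < a := (norm_nonneg _).lt_of_ne fun h ↦ by simp [ha, ← h] at had
  have hdpos : 0 < d := hd0.lt_of_ne fun h ↦ by simp [← h] at had
  have hin : ∀ z ∈ ball z₁ d, z ∈ closedBall z₀ (r / 2) ∧ ‖deriv g z‖ ≤ 2 * a := by
    intro z hz
    have h1 : d ≤ r / 2 - dist z z₀ := by
      have := dist_triangle z z₁ z₀
      have := mem_ball.1 hz
      linarith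
    have hzc : z ∈ closedBall z₀ (r / 2) := mem_closedBall.2 (by linarith)
    refine ⟨hzc, ?_⟩
    have h2 := hmax' z hzc
    have h3 : ‖deriv g z‖ * d ≤ 2 * a * d := by
      calc _ ≤ ‖deriv g z‖ * (r / 2 - dist z z₀) := by gcongr
        _ ≤ _ := h2
        _ = _ := by rw [hd]; ring
    exact le_of_mul_le_mul_right h3 hdpos
  have hsubd : ball z₁ d ⊆ ball z₀ r := fun z hz ↦ hsub (hin z hz).1
  have hschwarz : ∀ z ∈ ball z₁ d, dist (deriv g z) (deriv g z₁) ≤ 3 * a / d * dist z z₁ := by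
    intro z hz
    refine Complex.dist_le_div_mul_dist_of_mapsTo_ball (hg'.mono hsubd) (fun x hx ↦ ?_) hz
    rw [mem_closedBall, dist_eq_norm]
    linarith [norm_sub_le (deriv g x) (deriv g z₁), (hin x hx).2]
  have hsub6 : closedBall z₁ (d / 6) ⊆ ball z₁ d := closedBall_subset_ball (by linarith)
  have hgdiff : ∀ z ∈ ball z₁ d, DifferentiableAt ℂ g z := fun z hz ↦
    hg.differentiableAt (isOpen_ball.mem_nhds (hsubd hz))
  have hsphere : ∀ z ∈ closedBall z₁ (d / 6), a / 2 * dist z z₁ ≤ ‖g z - g z₁‖ := by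
    intro z hz
    have hder : ∀ x ∈ closedBall z₁ (d / 6),
        HasDerivAt (fun y ↦ g y - deriv g z₁ * y) (deriv g x - deriv g z₁) x := fun x hx ↦ by
      have := (hgdiff x (hsub6 hx)).hasDerivAt.sub ((hasDerivAt_id' x).const_mul (deriv g z₁))
      rwa [mul_one] at this
    have hb : ∀ x ∈ closedBall z₁ (d / 6),
        ‖deriv (fun y ↦ g y - deriv g z₁ * y) x‖ ≤ a / 2 := fun x hx ↦ by
      rw [(hder x hx).deriv, ← dist_eq_norm]
      refine (hschwarz x (hsub6 hx)).trans ?_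
      calc 3 * a / d * dist x z₁ ≤ 3 * a / d * (d / 6) := by gcongr; exact mem_closedBall.1 hx
        _ = a / 2 := by field_simp; norm_num
    have := (convex_closedBall z₁ (d / 6)).norm_image_sub_le_of_norm_deriv_le
      (fun x hx ↦ (hder x hx).differentiableAt) hb (mem_closedBall_self (by positivity)) hz
    have h2 : a * ‖z - z₁‖ ≤ ‖g z - g z₁‖ +
        ‖g z - deriv g z₁ * z - (g z₁ - deriv g z₁ * z₁)‖ := by
      have h3 : deriv g z₁ * (z - z₁) =
          g z - g z₁ - (g z - deriv g z₁ * z - (g z₁ - deriv g z₁ * z₁)) := by ring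
      rw [ha, ← norm_mul, h3]
      exact norm_sub_le _ _
    rw [dist_eq_norm]
    linarith
  have himage := DiffContOnCl.ball_subset_image_closedBall (f := g) (z₀ := z₁) (r := d / 6)
    (ε := a * d / 12) ((hg.mono fun z hz ↦ hsubd (hsub6 hz)).diffContOnCl_ball subset_rfl)
    (by positivity) (fun z hz ↦ by
      have := hsphere z (sphere_subset_closedBall hz)
      rw [mem_sphere.1 hz] at this
      linarith) (by
      have hne : ∀ᶠ z in 𝓝[≠] z₁, g z ≠ g z₁ := by
        filter_upwards [self_mem_nhdsWithin,
          nhdsWithin_le_nhds (closedBall_mem_nhds z₁ (show 0 < d / 6 by positivity))] with z hz hzb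
        have := hsphere z hzb
        have hpos : 0 < dist z z₁ := dist_pos.2 hz
        rw [← sub_ne_zero, ← norm_pos_iff]
        exact lt_of_lt_of_le (by positivity) this
      exact hne.frequently.filter_mono nhdsWithin_le_nhds)
  refine ⟨g z₁, (ball_subset_ball ?_).trans (himage.trans (image_mono (hsub6.trans hsubd)))⟩
  linarith

/-- A holomorphic map on a disc that never takes two values differing by `2πi` has derivative
bounded in terms of the radius. -/
theorem norm_deriv_mul_le_of_no_two_pi_I {g : ℂ → ℂ} {z₀ : ℂ} {r : ℝ} (hr : 0 < r)
    (hg : DifferentiableOn ℂ g (ball z₀ r))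
    (h : ∀ x ∈ ball z₀ r, ∀ y ∈ ball z₀ r, g x ≠ g y + 2 * Real.pi * Complex.I) :
    ‖deriv g z₀‖ * r ≤ 1000 := by
  by_contra! hlt
  obtain ⟨c, hc⟩ := exists_ball_subset_image hr hg
  have hpi : 2 * Real.pi < r * ‖deriv g z₀‖ / 96 := by
    have := Real.pi_lt_four
    linarith
  obtain ⟨x, hx, hxc⟩ := hc (show c + 2 * Real.pi * Complex.I ∈ _ by
    simpa [abs_of_pos Real.pi_pos] using hpi)
  obtain ⟨y, hy, hyc⟩ := hc (mem_ball_self (by linarith [Real.pi_pos]))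
  exact h x hx y hy (by rw [hxc, hyc])

/-- A distortion estimate for injective holomorphic maps on a disc omitting a value. -/
theorem norm_sub_le_of_injOn_of_omits {Φ : ℂ → ℂ} {c a : ℂ} {r : ℝ} (hr : 0 < r)
    (hΦ : DifferentiableOn ℂ Φ (ball c r)) (hinj : InjOn Φ (ball c r))
    (ha : ∀ z ∈ ball c r, Φ z ≠ a) {z : ℂ} (hz : 2000 * dist z c ≤ r) :
    ‖Φ z - Φ c‖ ≤ 4000 * (dist z c / r) * ‖Φ c - a‖ := by
  have hc := mem_ball_self (x := c) hr
  obtain ⟨φ, hφ, -, hexp⟩ := exists_holomorphic_lift Complex.differentiable_exp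
    Complex.isCoveringMapOn_exp isOpen_ball (convex_ball c r) (hΦ.sub_const a)
    (fun z hz ↦ sub_ne_zero.2 (ha z hz)) hc (Complex.exp_log (sub_ne_zero.2 (ha c hc)))
  have hno : ∀ x ∈ ball c r, ∀ y ∈ ball c r, φ x ≠ φ y + 2 * Real.pi * Complex.I := by
    intro x hx y hy hxy
    have h1 : Φ x = Φ y := by
      have := hexp x hx
      rw [hxy, Complex.exp_periodic, hexp y hy] at this
      exact (sub_left_inj.1 this).symm
    rw [hinj hx hy h1] at hxy
    exact Complex.two_pi_I_ne_zero (left_eq_add.1 hxy)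
  have hsub : closedBall c (r / 2) ⊆ ball c r := closedBall_subset_ball (by linarith)
  have hbound : ∀ y ∈ closedBall c (r / 2), ‖deriv φ y‖ ≤ 2000 / r := by
    intro y hy
    have hb : ball y (r / 2) ⊆ ball c r :=
      ball_subset_ball' (by linarith [mem_closedBall.1 hy])
    have := norm_deriv_mul_le_of_no_two_pi_I (half_pos hr) (hφ.mono hb)
      fun x hx y hy ↦ hno x (hb hx) y (hb hy)
    rw [le_div_iff₀ hr]
    linarith
  have hzc : z ∈ closedBall c (r / 2) :=
    mem_closedBall.2 (by linarith [dist_nonneg (x := z) (y := c)])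
  have hdist := (convex_closedBall c (r / 2)).norm_image_sub_le_of_norm_deriv_le
    (fun x hx ↦ hφ.differentiableAt (isOpen_ball.mem_nhds (hsub hx))) hbound
    (mem_closedBall_self (by positivity)) hzc
  rw [← dist_eq_norm z c, div_mul_eq_mul_div] at hdist
  have hle1 : ‖φ z - φ c‖ ≤ 1 := hdist.trans ((div_le_one hr).2 hz)
  have heq : Φ z - Φ c = (Complex.exp (φ z - φ c) - 1) * (Φ c - a) := by
    have h1 := hexp z (hsub hzc)
    have h2 := hexp c hc
    rw [Complex.exp_sub, h1, h2]
    have := sub_ne_zero.2 (ha c hc)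
    field_simp
    ring
  rw [heq, norm_mul]
  gcongr
  calc _ ≤ 2 * ‖φ z - φ c‖ := Complex.norm_exp_sub_one_le hle1
    _ ≤ 2 * (2000 * dist z c / r) := by gcongr
    _ = _ := by ring

/-- An entire function of polynomial growth is a polynomial. -/
theorem exists_polynomial_of_norm_le_mul_pow {f : ℂ → ℂ} (hf : Differentiable ℂ f) {C ρ : ℝ}
    {m : ℕ} (h : ∀ z, ρ ≤ ‖z‖ → ‖f z‖ ≤ C * ‖z‖ ^ m) :
    ∃ p : Polynomial ℂ, ∀ z, f z = p.eval z := by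
  have hzero : ∀ n, m < n → iteratedDeriv n f 0 = 0 := by
    intro n hn
    have hlim : Tendsto (fun r : ℝ ↦ n.factorial * C * (r ^ (n - m))⁻¹) atTop (𝓝 0) := by
      simpa using (tendsto_inv_atTop_zero.comp
        (tendsto_pow_atTop (α := ℝ) (Nat.sub_ne_zero_of_lt hn))).const_mul (n.factorial * C)
    refine norm_le_zero_iff.1 (ge_of_tendsto hlim ?_)
    filter_upwards [eventually_gt_atTop 0, eventually_ge_atTop ρ] with r hr hrρ
    have := Complex.norm_iteratedDeriv_le_of_forall_mem_sphere_norm_le (c := 0) (C := C * r ^ m)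
      n hr hf.diffContOnCl fun z hz ↦ by
        have hz : ‖z‖ = r := by simpa using hz
        simpa [hz] using h z (hz ▸ hrρ)
    refine this.trans_eq ?_
    obtain ⟨k, rfl⟩ := Nat.exists_eq_add_of_lt hn
    rw [show m + k + 1 - m = k + 1 by omega, show m + k + 1 = m + (k + 1) by omega, pow_add]
    field_simp
  refine ⟨∑ n ∈ Finset.range (m + 1),
    Polynomial.monomial n ((n.factorial : ℂ)⁻¹ * iteratedDeriv n f 0), fun z ↦ ?_⟩
  rw [← Complex.taylorSeries_eq_of_entire' 0 z hf, Polynomial.eval_finsetSum]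
  rw [tsum_eq_sum (s := Finset.range (m + 1))]
  · simp
  · intro n hn
    rw [hzero n (by simpa using hn)]
    simp

section LogarithmicCoordinates

variable {f : ℂ → ℂ} {T : Set ℂ} {h₀ : ℝ}

/-- A holomorphic lift of the exponential through a transcendental entire function is not
periodic. -/
theorem not_periodic_of_lift_exp (hf : TranscendentalEntire f) {γ : ℂ → ℂ}
    (hγ : DifferentiableOn ℂ γ {ζ | h₀ < ζ.re})
    (hfγ : ∀ ζ : ℂ, h₀ < ζ.re → f (γ ζ) = Complex.exp ζ) {m : ℕ} (hm : 0 < m) :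
    ¬ ∀ ζ : ℂ, h₀ < ζ.re → γ (ζ + 2 * Real.pi * Complex.I * m) = γ ζ := by
  classical
  intro hper
  obtain ⟨c, hc⟩ : ∃ c : ℝ, c = 2 * Real.pi * m := ⟨_, rfl⟩
  have hmR : (0 : ℝ) < m := by exact_mod_cast hm
  have hcpos : 0 < c := by rw [hc]; positivity
  obtain ⟨κ, hκ⟩ : ∃ κ : ℂ → ℂ, κ = fun τ ↦
      if h₀ < τ.im then (γ (-Complex.I * τ))⁻¹ else 0 := ⟨_, rfl⟩
  have hκH : ∀ τ : ℂ, h₀ < τ.im → κ τ = (γ (-Complex.I * τ))⁻¹ := fun τ hτ ↦ by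
    simp [hκ, hτ]
  have hre : ∀ τ : ℂ, (-Complex.I * τ).re = τ.im := fun τ ↦ by simp
  have hκper : Function.Periodic κ c := by
    intro τ
    simp only [hκ, Complex.add_im, Complex.ofReal_im, add_zero]
    split_ifs with h
    · rw [← hper (-Complex.I * (τ + c)) (by simpa using h)]
      congr 2
      rw [hc]
      push_cast
      ring
    · rfl
  -- `γ` tends to infinity with the real part
  have hlarge : ∀ M : ℝ, ∃ B : ℝ, ∀ ζ : ℂ, h₀ < ζ.re → B < ζ.re → M < ‖γ ζ‖ := by
    intro M
    obtain ⟨B, hB⟩ := (isCompact_closedBall (0 : ℂ) M).exists_bound_of_continuousOn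
      hf.1.continuous.continuousOn
    refine ⟨Real.log (max B 1), fun ζ hζ hBζ ↦ ?_⟩
    by_contra! hle
    have h1 := hB (γ ζ) (by simpa using hle)
    rw [hfγ ζ hζ, Complex.norm_exp] at h1
    have h2 := (Real.log_lt_iff_lt_exp (by positivity)).1 hBζ
    exact absurd (h1.trans (le_max_left B 1)) (not_le.2 h2)
  have hinf : ∀ B : ℝ, ∀ᶠ τ in comap Complex.im atTop, B < τ.im := fun B ↦
    tendsto_comap.eventually (eventually_gt_atTop B)
  have hev : ∀ {P : ℂ → Prop}, (∀ᶠ τ in comap Complex.im atTop, P τ) →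
      ∃ A, ∀ τ : ℂ, A ≤ τ.im → P τ := fun hP ↦ by
    obtain ⟨A, -, hA⟩ := (atTop_basis.comap Complex.im).eventually_iff.1 hP
    exact ⟨A, fun τ hτ ↦ hA hτ⟩
  have hne : ∀ᶠ τ in comap Complex.im atTop, γ (-Complex.I * τ) ≠ 0 := by
    obtain ⟨B, hB⟩ := hlarge 0
    filter_upwards [hinf h₀, hinf B] with τ h1 h2
    exact norm_pos_iff.1 (hB _ (by rwa [hre]) (by rwa [hre]))
  have hzero : ZeroAtFilter (comap Complex.im atTop) κ := by
    rw [ZeroAtFilter, Metric.tendsto_nhds]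
    intro ε hε
    obtain ⟨B, hB⟩ := hlarge ε⁻¹
    filter_upwards [hinf h₀, hinf B] with τ h1 h2
    rw [dist_zero_right, hκH τ h1, norm_inv]
    exact inv_lt_of_inv_lt₀ hε (hB _ (by rwa [hre]) (by rwa [hre]))
  have hopen : IsOpen {ζ : ℂ | h₀ < ζ.re} := isOpen_lt continuous_const Complex.continuous_re
  have hhol : ∀ᶠ τ in comap Complex.im atTop, DifferentiableAt ℂ κ τ := by
    filter_upwards [hinf h₀, hne] with τ h1 h2
    have hd : DifferentiableAt ℂ γ (-Complex.I * τ) :=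
      hγ.differentiableAt (hopen.mem_nhds (show h₀ < (-Complex.I * τ).re by rwa [hre]))
    have : DifferentiableAt ℂ (fun τ ↦ (γ (-Complex.I * τ))⁻¹) τ :=
      (hd.comp τ (differentiableAt_id.const_mul _)).inv h2
    refine this.congr_of_eventuallyEq ?_
    filter_upwards [(isOpen_lt continuous_const Complex.continuous_im).mem_nhds h1] with σ hσ
    exact hκH σ hσ
  obtain ⟨C, hC⟩ :=
    (Function.Periodic.exp_decay_of_zero_at_inf hcpos hκper hhol hzero).bound
  obtain ⟨A, hA⟩ := hev ((hinf h₀).and (hne.and hC))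
  have hKd := Function.Periodic.differentiableAt_cuspFunction_zero hcpos hκper hhol
    hzero.boundedAtFilter
  have hK0 := Function.Periodic.cuspFunction_zero_of_zero_at_inf hcpos hzero
  have hKana : AnalyticAt ℂ (Function.Periodic.cuspFunction c κ) 0 := by
    refine Complex.analyticAt_iff_eventually_differentiableAt.2 ?_
    have := Function.Periodic.eventually_differentiableAt_cuspFunction_nhds_ne_zero hcpos hκper hhol
    rw [eventually_nhdsWithin_iff] at this
    filter_upwards [this] with q hq
    rcases eq_or_ne q 0 with rfl | h
    · exact hKd
    · exact hq h
  have hKopen : 𝓝 (0 : ℂ) ≤ map (Function.Periodic.cuspFunction c κ) (𝓝 0) := by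
    rcases hKana.eventually_constant_or_nhds_le_map_nhds with h | h
    · have := (Function.Periodic.qParam_tendsto hcpos).eventually (nhdsWithin_le_nhds h)
      obtain ⟨B, hB⟩ := hev this
      have h1 := hB (Complex.I * (max A B : ℝ)) (by simp)
      obtain ⟨h2, h3, -⟩ := hA (Complex.I * (max A B : ℝ)) (by simp)
      rw [Function.Periodic.eq_cuspFunction hcpos.ne' hκper, hK0, hκH _ h2] at h1
      exact absurd h1 (inv_ne_zero h3)
    · rwa [hK0] at h
  have hball : ∀ᶠ z in Bornology.cobounded ℂ, z⁻¹ ∈ Function.Periodic.cuspFunction c κ ''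
      ball 0 (Real.exp (-2 * Real.pi * A / c)) :=
    tendsto_inv₀_cobounded.eventually (hKopen (image_mem_map (ball_mem_nhds 0 (Real.exp_pos _))))
  obtain ⟨ρ, -, hρ⟩ := hasBasis_cobounded_norm.eventually_iff.1 hball
  refine hf.2 (exists_polynomial_of_norm_le_mul_pow hf.1 (C := C ^ m) (ρ := max ρ 1) (m := m)
    fun z hz ↦ ?_)
  obtain ⟨q, hq, hqz⟩ := hρ ((le_max_left _ _).trans hz)
  have hzpos : 0 < ‖z‖ := one_pos.trans_le ((le_max_right _ _).trans hz)
  have hq0 : q ≠ 0 := by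
    rintro rfl
    rw [hK0] at hqz
    exact norm_pos_iff.1 hzpos (inv_eq_zero.1 hqz.symm)
  set τ := Function.Periodic.invQParam c q with hτ
  have hqτ : Function.Periodic.qParam c τ = q := Function.Periodic.qParam_right_inv hcpos.ne' hq0
  have hAτ : A < τ.im := by
    rw [← Function.Periodic.norm_qParam_lt_iff hcpos, hqτ]
    simpa using hq
  obtain ⟨h1, h2, h3⟩ := hA τ hAτ.le
  rw [← hqτ, Function.Periodic.eq_cuspFunction hcpos.ne' hκper, hκH τ h1, inv_inj] at hqz
  rw [hκH τ h1, hqz, Real.norm_of_nonneg (Real.exp_pos _).le, norm_inv,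
    show -2 * Real.pi * τ.im / c = -(τ.im / m) by rw [hc]; field_simp, Real.exp_neg,
    inv_le_iff_one_le_mul₀ hzpos] at h3
  have h4 : Real.exp (τ.im / m) ≤ C * ‖z‖ := by
    have := Real.exp_pos (τ.im / m)
    calc _ = Real.exp (τ.im / m) * 1 := (mul_one _).symm
      _ ≤ _ := mul_le_mul_of_nonneg_left h3 this.le
      _ = _ := by field_simp
  rw [← hqz, hfγ _ (by rwa [hre]), Complex.norm_exp, hre, hqz, ← mul_pow,
    show τ.im = m * (τ.im / m) by field_simp, Real.exp_nat_mul]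
  gcongr

/-- A holomorphic lift of the exponential through a transcendental entire function,
defined on a right half-plane, is injective. -/
theorem injOn_of_lift_exp (hf : TranscendentalEntire f) (hcov : IsCoveringMapOn f T)
    (hT : ∀ z : ℂ, Real.exp h₀ < ‖z‖ → z ∈ T) {γ : ℂ → ℂ}
    (hγ : DifferentiableOn ℂ γ {ζ | h₀ < ζ.re})
    (hfγ : ∀ ζ : ℂ, h₀ < ζ.re → f (γ ζ) = Complex.exp ζ) :
    InjOn γ {ζ | h₀ < ζ.re} := by
  have key : ∀ a : ℂ, h₀ < a.re → ∀ m : ℕ, 0 < m →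
      γ (a + 2 * Real.pi * Complex.I * m) ≠ γ a := by
    intro a ha m hm heq
    have hre : ∀ ζ : ℂ, (ζ + 2 * Real.pi * Complex.I * m).re = ζ.re := fun ζ ↦ by simp
    have hexp : ∀ ζ : ℂ, Complex.exp (ζ + 2 * Real.pi * Complex.I * m) = Complex.exp ζ :=
      fun ζ ↦ by
        rw [mul_comm _ (m : ℂ)]
        exact Complex.exp_periodic.nat_mul m ζ
    refine not_periodic_of_lift_exp hf hγ hfγ hm fun ζ hζ ↦ ?_
    refine eqOn_of_lifts hcov (convex_halfSpace_re_gt h₀).isPreconnected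
      (φ := fun ζ ↦ γ (ζ + 2 * Real.pi * Complex.I * m)) (ψ := γ)
      (hγ.continuousOn.comp (by fun_prop) fun ζ hζ ↦ ?_) hγ.continuousOn (fun ζ hζ ↦ ?_)
      (fun ζ hζ ↦ ?_) ha heq hζ
    · simpa [hre] using! hζ
    · rw [hfγ _ (by rw [hre]; exact hζ), hexp]
      exact hT _ (by rw [Complex.norm_exp]; exact Real.exp_lt_exp.2 hζ)
    · rw [hfγ _ (by rw [hre]; exact hζ), hexp, hfγ ζ hζ]
  intro a ha b hb hab
  have h1 : Complex.exp a = Complex.exp b := by rw [← hfγ a ha, ← hfγ b hb, hab]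
  obtain ⟨n, hn⟩ := Complex.exp_eq_exp_iff_exists_int.1 h1
  rcases lt_trichotomy n 0 with h | h | h
  · obtain ⟨m, rfl⟩ : ∃ m : ℕ, n = -m := ⟨n.natAbs, by omega⟩
    refine absurd ?_ (key a ha m (by omega))
    rw [hab, hn]
    congr 1
    push_cast
    ring
  · simpa [h] using hn
  · obtain ⟨m, rfl⟩ : ∃ m : ℕ, n = m := ⟨n.natAbs, by omega⟩
    refine absurd ?_ (key b hb m (by omega))
    rw [← hab, hn]
    congr 1
    push_cast
    ring

/-- The **Eremenko–Lyubich expansion estimate**: inverse branches of a function in class `B` in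
logarithmic coordinates, defined on a right half-plane, are strongly contracting. -/
theorem exists_log_inverse_branch (hf : TranscendentalEntire f) (hcov : IsCoveringMapOn f T)
    (hT : ∀ z : ℂ, Real.exp h₀ < ‖z‖ → z ∈ T) (hf0 : ‖f 0‖ ≤ Real.exp h₀) {ζ₀ η₀ : ℂ}
    (hζ₀ : h₀ < ζ₀.re) (h : f (Complex.exp η₀) = Complex.exp ζ₀) :
    ∃ G : ℂ → ℂ, DifferentiableOn ℂ G {ζ | h₀ < ζ.re} ∧ G ζ₀ = η₀ ∧
      (∀ ζ : ℂ, h₀ < ζ.re → f (Complex.exp (G ζ)) = Complex.exp ζ) ∧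
      InjOn (fun ζ ↦ Complex.exp (G ζ)) {ζ | h₀ < ζ.re} ∧
      ∀ ζ : ℂ, h₀ < ζ.re → ‖deriv G ζ‖ * (ζ.re - h₀) ≤ 1000 := by
  have hopen : IsOpen {ζ : ℂ | h₀ < ζ.re} := isOpen_lt continuous_const Complex.continuous_re
  have hconv : Convex ℝ {ζ : ℂ | h₀ < ζ.re} := convex_halfSpace_re_gt h₀
  have hexp : ∀ ζ : ℂ, h₀ < ζ.re → Real.exp h₀ < ‖Complex.exp ζ‖ := fun ζ hζ ↦ by
    rw [Complex.norm_exp]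
    exact Real.exp_lt_exp.2 hζ
  obtain ⟨γ, hγ, hγ₀, hfγ⟩ := exists_holomorphic_lift hf.1 hcov hopen hconv
    Complex.differentiable_exp.differentiableOn (fun ζ hζ ↦ hT _ (hexp ζ hζ)) hζ₀ h
  have hinj := injOn_of_lift_exp hf hcov hT hγ hfγ
  have hne : ∀ ζ : ℂ, h₀ < ζ.re → γ ζ ≠ 0 := fun ζ hζ h0 ↦ by
    have := hfγ ζ hζ
    rw [h0] at this
    exact absurd (this ▸ hf0) (not_le.2 (hexp ζ hζ))
  obtain ⟨G, hG, hG₀, hexpG⟩ := exists_holomorphic_lift Complex.differentiable_exp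
    Complex.isCoveringMapOn_exp hopen hconv hγ (fun ζ hζ ↦ hne ζ hζ) hζ₀ hγ₀.symm
  have hinjG : InjOn (fun ζ ↦ Complex.exp (G ζ)) {ζ | h₀ < ζ.re} := fun x hx y hy hxy ↦
    hinj hx hy (by rw [← hexpG x hx, ← hexpG y hy]; exact hxy)
  refine ⟨G, hG, hG₀, fun ζ hζ ↦ by rw [hexpG ζ hζ, hfγ ζ hζ], hinjG, fun ζ hζ ↦ ?_⟩
  have hsub : ball ζ (ζ.re - h₀) ⊆ {ζ | h₀ < ζ.re} := fun x hx ↦ by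
    have h1 := (Complex.abs_re_le_norm (x - ζ)).trans_lt (mem_ball_iff_norm.1 hx)
    have h2 := (abs_lt.1 h1).1
    rw [Complex.sub_re] at h2
    show h₀ < x.re
    linarith
  refine norm_deriv_mul_le_of_no_two_pi_I (sub_pos.2 hζ) (hG.mono hsub) fun x hx y hy hxy ↦ ?_
  have h1 : x = y := hinjG (hsub hx) (hsub hy) (by
    simp only [hxy]
    exact Complex.exp_periodic _)
  rw [h1] at hxy
  exact Complex.two_pi_I_ne_zero (left_eq_add.1 hxy)

end LogarithmicCoordinates

section EscapingPoints

variable {f : ℂ → ℂ} {T : Set ℂ} {h₀ : ℝ}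

theorem TranscendentalEntire.isOpenMap (hf : TranscendentalEntire f) : IsOpenMap f := by
  have hana : AnalyticOnNhd ℂ f univ := hf.1.differentiableOn.analyticOnNhd isOpen_univ
  rcases hana.is_constant_or_isOpenMap with ⟨w, hw⟩ | h
  · exact absurd ⟨Polynomial.C w, fun z ↦ by simp [hw]⟩ hf.2
  · exact h

/-- No disc has all its iterated images in a fixed neighbourhood of infinity. -/
theorem exists_norm_iterate_le (hf : TranscendentalEntire f) (hcov : IsCoveringMapOn f T)
    (hT : ∀ z : ℂ, Real.exp h₀ < ‖z‖ → z ∈ T) (hf0 : ‖f 0‖ ≤ Real.exp h₀) {c : ℂ} {r : ℝ}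
    (hr : 0 < r) : ∃ y ∈ ball c r, ∃ n, ‖f^[n] y‖ ≤ Real.exp (h₀ + 2000) := by
  by_contra! hlarge
  have hc := mem_ball_self (x := c) hr
  have hne : ∀ n, ∀ y ∈ ball c r, f^[n] y ≠ 0 := fun n y hy ↦
    norm_pos_iff.1 ((Real.exp_pos _).trans (hlarge y hy n))
  have hlog : ∀ n, ∃ ψ : ℂ → ℂ, DifferentiableOn ℂ ψ (ball c r) ∧
      ∀ y ∈ ball c r, Complex.exp (ψ y) = f^[n] y := fun n ↦ by
    obtain ⟨ψ, h1, -, h2⟩ := exists_holomorphic_lift Complex.differentiable_exp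
      Complex.isCoveringMapOn_exp isOpen_ball (convex_ball c r) (hf.1.iterate n).differentiableOn
      (fun y hy ↦ hne n y hy) hc (Complex.exp_log (hne n c hc))
    exact ⟨ψ, h1, h2⟩
  choose ψ hψ hexp using hlog
  have hre : ∀ n, ∀ y ∈ ball c r, h₀ + 2000 < (ψ n y).re := fun n y hy ↦ by
    have := hlarge y hy n
    rwa [← hexp n y hy, Complex.norm_exp, Real.exp_lt_exp] at this
  have hre' : ∀ n, ∀ y ∈ ball c r, h₀ < (ψ n y).re := fun n y hy ↦ by
    linarith [hre n y hy]
  have key : ∀ n, ‖deriv (ψ n) c‖ ≤ 1 / 2 * ‖deriv (ψ (n + 1)) c‖ ∧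
      ‖deriv (ψ n) c‖ * r ≤ 1000 := by
    intro n
    have hstep : ∀ y ∈ ball c r, f (Complex.exp (ψ n y)) = Complex.exp (ψ (n + 1) y) :=
      fun y hy ↦ by rw [hexp n y hy, hexp (n + 1) y hy, Function.iterate_succ_apply']
    obtain ⟨G, hG, hGc, hfG, hinj, hder⟩ := exists_log_inverse_branch hf hcov hT hf0
      (hre' (n + 1) c hc) (hstep c hc)
    have hGψ : ContinuousOn (fun y ↦ G (ψ (n + 1) y)) (ball c r) :=
      hG.continuousOn.comp (hψ (n + 1)).continuousOn fun y hy ↦ hre' (n + 1) y hy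
    have heq1 : EqOn (fun y ↦ Complex.exp (G (ψ (n + 1) y))) (fun y ↦ Complex.exp (ψ n y))
        (ball c r) := by
      refine eqOn_of_lifts hcov (convex_ball c r).isPreconnected hGψ.cexp
        (hψ n).continuousOn.cexp (fun y hy ↦ ?_) (fun y hy ↦ ?_) hc (by rw [hGc])
      · rw [hfG _ (hre' (n + 1) y hy)]
        exact hT _ (by
          rw [Complex.norm_exp]
          exact Real.exp_lt_exp.2 (hre' (n + 1) y hy))
      · rw [hfG _ (hre' (n + 1) y hy), hstep y hy]
    have heq : EqOn (fun y ↦ G (ψ (n + 1) y)) (ψ n) (ball c r) :=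
      eqOn_of_lifts Complex.isCoveringMapOn_exp (convex_ball c r).isPreconnected hGψ
        (hψ n).continuousOn (fun y _ ↦ Complex.exp_ne_zero _) heq1 hc hGc
    constructor
    · have hopen : IsOpen {ζ : ℂ | h₀ < ζ.re} :=
        isOpen_lt continuous_const Complex.continuous_re
      have h1 : deriv (ψ n) c = deriv G (ψ (n + 1) c) * deriv (ψ (n + 1)) c := by
        rw [← (heq.eventuallyEq_of_mem (isOpen_ball.mem_nhds hc)).deriv_eq]
        exact deriv_comp c (hG.differentiableAt (hopen.mem_nhds (hre' (n + 1) c hc)))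
          ((hψ (n + 1)).differentiableAt (isOpen_ball.mem_nhds hc))
      rw [h1, norm_mul]
      gcongr
      nlinarith [hder _ (hre' (n + 1) c hc), hre (n + 1) c hc,
        norm_nonneg (deriv G (ψ (n + 1) c))]
    · refine norm_deriv_mul_le_of_no_two_pi_I hr (hψ n) fun x hx y hy hxy ↦ ?_
      have h1 : ψ (n + 1) x = ψ (n + 1) y :=
        hinj (hre' (n + 1) x hx) (hre' (n + 1) y hy) (by
          have h2 := heq1 hx
          have h3 := heq1 hy
          simp only at h2 h3 ⊢
          rw [h2, h3, hxy]
          exact Complex.exp_periodic _)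
      have h2 := heq hx
      have h3 := heq hy
      simp only at h2 h3
      rw [← h2, ← h3, h1] at hxy
      exact Complex.two_pi_I_ne_zero (left_eq_add.1 hxy)
  have hpow : ∀ n, ‖deriv (ψ 0) c‖ ≤ (1 / 2) ^ n * ‖deriv (ψ n) c‖ := by
    intro n
    induction n with
    | zero => simp
    | succ n ih =>
      refine ih.trans ?_
      rw [pow_succ, mul_assoc]
      gcongr
      exact (key n).1
  have hlim : Tendsto (fun n : ℕ ↦ (1 / 2 : ℝ) ^ n * (1000 / r)) atTop (𝓝 0) := by
    simpa using (tendsto_pow_atTop_nhds_zero_of_lt_one (r := (1 / 2 : ℝ)) (by norm_num)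
      (by norm_num)).mul_const (1000 / r)
  have hzero : deriv (ψ 0) c = 0 := norm_le_zero_iff.1 (ge_of_tendsto' hlim fun n ↦
    (hpow n).trans (by gcongr; exact (le_div_iff₀ hr).2 (key n).2))
  have hd : HasDerivAt (fun y ↦ Complex.exp (ψ 0 y)) (Complex.exp (ψ 0 c) * deriv (ψ 0) c) c :=
    ((hψ 0).differentiableAt (isOpen_ball.mem_nhds hc)).hasDerivAt.cexp
  have hid : HasDerivAt (fun y ↦ Complex.exp (ψ 0 y)) 1 c :=
    (hasDerivAt_id c).congr_of_eventuallyEq (by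
      filter_upwards [isOpen_ball.mem_nhds hc] with y hy
      exact hexp 0 y hy)
  have := hd.unique hid
  rw [hzero, mul_zero] at this
  exact zero_ne_one this

/-- Points of the Fatou set of a function in class `B` do not escape to infinity. -/
theorem not_tendsto_norm_of_mem_fatouSet (hf : TranscendentalEntire f)
    (hcov : IsCoveringMapOn f T) (hT : ∀ z : ℂ, Real.exp h₀ < ‖z‖ → z ∈ T)
    (hf0 : ‖f 0‖ ≤ Real.exp h₀) {w : ℂ} (hw : w ∈ FatouSet f) :
    ¬ Tendsto (fun n ↦ ‖f^[n] w‖) atTop atTop := by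
  intro hlim
  obtain ⟨N, hN, hwN, hequi⟩ := hw
  set A := Real.exp (h₀ + 2000) with hA
  have hApos : 0 < A := Real.exp_pos _
  have hsqrt : 0 < Real.sqrt (1 + A ^ 2) := Real.sqrt_pos.2 (by positivity)
  obtain ⟨δ, hδ, hδN⟩ := hequi w hwN (1 / (2 * Real.sqrt (1 + A ^ 2))) (by positivity)
  obtain ⟨r, hr, hrN⟩ := Metric.isOpen_iff.1 hN w hwN
  obtain ⟨n₀, hn₀⟩ := eventually_atTop.1 (tendsto_atTop.1 hlim (max (2 * A) 1))
  have hlarge : ∀ y ∈ ball w (min δ r), ∀ n, n₀ ≤ n → A < ‖f^[n] y‖ := by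
    intro y hy n hn
    by_contra! hle
    have hlt := hδN y (hrN (ball_subset_ball (min_le_right _ _) hy))
      (ball_subset_ball (min_le_left δ r) hy) n
    have hx := hn₀ n hn
    have hx1 : 1 ≤ ‖f^[n] w‖ := (le_max_right _ _).trans hx
    have hx2 : 2 * A ≤ ‖f^[n] w‖ := (le_max_left _ _).trans hx
    generalize f^[n] w = x at hx1 hx2 hlt
    generalize f^[n] y = z at hle hlt
    refine absurd hlt (not_lt.2 ?_)
    have hdist : ‖x‖ / 2 ≤ dist z x := by
      rw [dist_comm, dist_eq_norm]
      linarith [norm_sub_norm_le x z]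
    have hs1 : Real.sqrt (1 + ‖x‖ ^ 2) ≤ 2 * ‖x‖ :=
      Real.sqrt_le_iff.2 ⟨by positivity, by nlinarith⟩
    have hs2 : Real.sqrt (1 + ‖z‖ ^ 2) ≤ Real.sqrt (1 + A ^ 2) := by gcongr
    have hz0 : 0 < Real.sqrt (1 + ‖z‖ ^ 2) := Real.sqrt_pos.2 (by positivity)
    have hx0 : 0 < Real.sqrt (1 + ‖x‖ ^ 2) := Real.sqrt_pos.2 (by positivity)
    rw [sphericalDist, div_le_div_iff₀ (by positivity) (by positivity)]
    calc 1 * (Real.sqrt (1 + ‖z‖ ^ 2) * Real.sqrt (1 + ‖x‖ ^ 2))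
        ≤ 1 * (Real.sqrt (1 + A ^ 2) * (2 * ‖x‖)) := by gcongr
      _ = 2 * (‖x‖ / 2) * (2 * Real.sqrt (1 + A ^ 2)) := by ring
      _ ≤ 2 * dist z x * (2 * Real.sqrt (1 + A ^ 2)) := by gcongr
  have hopen : IsOpen (f^[n₀] '' ball w (min δ r)) := by
    have hiter : ∀ n, IsOpenMap f^[n] := fun n ↦ by
      induction n with
      | zero => exact IsOpenMap.id
      | succ n ih => exact ih.comp hf.isOpenMap
    exact hiter n₀ _ isOpen_ball
  obtain ⟨ρ, hρ, hsub⟩ := Metric.isOpen_iff.1 hopen _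
    (mem_image_of_mem _ (mem_ball_self (lt_min hδ hr)))
  obtain ⟨y, hy, n, hn⟩ := exists_norm_iterate_le hf hcov hT hf0 (c := f^[n₀] w) hρ
  obtain ⟨x, hx, rfl⟩ := hsub hy
  rw [← Function.iterate_add_apply] at hn
  exact absurd hn (not_le.2 (hlarge x hx (n + n₀) (by omega)))

end EscapingPoints

section Orbits

variable {f : ℂ → ℂ} {w : ℂ}

theorem exists_norm_iterate_le_of_continuous (hf : Continuous f) (L : ℝ) (J : ℕ) :
    ∃ B, ∀ i ≤ J, ∀ z : ℂ, ‖z‖ ≤ L → ‖f^[i] z‖ ≤ B := by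
  have h : ∀ i, ∃ B, ∀ z : ℂ, ‖z‖ ≤ L → ‖f^[i] z‖ ≤ B := fun i ↦ by
    obtain ⟨B, hB⟩ := (isCompact_closedBall (0 : ℂ) L).exists_bound_of_continuousOn
      (hf.iterate i).continuousOn
    exact ⟨B, fun z hz ↦ hB z (by simpa using hz)⟩
  choose B hB using h
  refine ⟨∑ i ∈ Finset.range (J + 1), |B i|, fun i hi z hz ↦ (hB i z hz).trans
    ((le_abs_self _).trans ?_)⟩
  exact Finset.single_le_sum (f := fun i ↦ |B i|) (fun _ _ ↦ abs_nonneg _)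
    (Finset.mem_range.2 (by omega))

/-- An orbit that is unbounded and returns to a disc infinitely often has infinitely many return
times that come after a long excursion outside the disc. -/
theorem exists_return_time (hf : Continuous f) {L : ℝ}
    (hfreq : ∀ m, ∃ n ≥ m, ‖f^[n] w‖ ≤ L) (hunb : ∀ B : ℝ, ∀ m, ∃ n ≥ m, B < ‖f^[n] w‖)
    (J n₁ : ℕ) : ∃ n ≥ n₁, J ≤ n ∧ ‖f^[n] w‖ ≤ L ∧
      ∀ i, 1 ≤ i → i ≤ J → L < ‖f^[n - i] w‖ := by
  classical
  obtain ⟨B, hB⟩ := exists_norm_iterate_le_of_continuous hf L J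
  obtain ⟨m, hm, hmB⟩ := hunb B (n₁ + J)
  have hex := hfreq m
  have hn := Nat.find_spec hex
  have hmin : ∀ k, k < Nat.find hex → m ≤ k → L < ‖f^[k] w‖ := fun k hk hmk ↦ by
    have := Nat.find_min hex hk
    push Not at this
    exact this hmk
  generalize Nat.find hex = n at hn hmin
  refine ⟨n, by omega, by omega, hn.2, fun i hi hiJ ↦ ?_⟩
  by_contra! hle
  rcases le_or_gt m (n - i) with h | h
  · exact absurd (hmin (n - i) (by omega) h) (not_lt.2 hle)
  · have := hB (m - (n - i)) (by omega) _ hle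
    rw [← Function.iterate_add_apply, Nat.sub_add_cancel h.le] at this
    exact absurd hmB (not_lt.2 this)

theorem exists_norm_iterate_le_of_mapsTo (hf : Continuous f) {L : ℝ} {n : ℕ} (hn : 1 ≤ n)
    (hmaps : MapsTo f^[n] (closedBall 0 L) (closedBall 0 L)) (hw : ‖w‖ ≤ L) :
    ∃ B, ∀ m, ‖f^[m] w‖ ≤ B := by
  obtain ⟨B, hB⟩ := exists_norm_iterate_le_of_continuous hf L n
  refine ⟨B, fun m ↦ ?_⟩
  rw [← Nat.mod_add_div m n, Function.iterate_add_apply, Function.iterate_mul]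
  exact hB _ (Nat.mod_lt _ hn).le _ (by
    simpa using hmaps.iterate (m / n) (show w ∈ closedBall 0 L by simpa using hw))

end Orbits

section PullBack

variable {f : ℂ → ℂ} {S : Set ℂ} {h₀ : ℝ}

/-- An inverse branch of `f` that omits a value of smaller modulus than its value at the centre
has a logarithm with small oscillation near the centre. -/
theorem exists_log_inverse_branch_ball (hf : Differentiable ℂ f) (hcov : IsCoveringMapOn f Sᶜ)
    {x y a : ℂ} {ε : ℝ} (hε : 0 < ε) (hdisj : ∀ z ∈ ball x ε, z ∉ S) (hy : y ≠ 0) (hfy : f y = x)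
    (ha : f a ∉ ball x ε) (hay : ‖a‖ ≤ ‖y‖) :
    ∃ ψ : ℂ → ℂ, DifferentiableOn ℂ ψ (ball x (ε / 32000)) ∧ Complex.exp (ψ x) = y ∧
      ∀ z ∈ ball x (ε / 32000), f (Complex.exp (ψ z)) = z ∧ ‖ψ z - ψ x‖ ≤ 1 := by
  obtain ⟨Φ, hΦ, hΦx, hfΦ⟩ := exists_holomorphic_lift hf hcov isOpen_ball (convex_ball x ε)
    differentiableOn_id (fun z hz ↦ hdisj z hz) (mem_ball_self hε) hfy
  have hsub : ball x (ε / 32000) ⊆ ball x ε := ball_subset_ball (by linarith)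
  have hinj : InjOn Φ (ball x ε) := fun u hu v hv huv ↦ by
    have := hfΦ u hu
    rw [huv, hfΦ v hv] at this
    exact this.symm
  have hsmall : ∀ z ∈ ball x (ε / 32000), ‖Φ z / y - 1‖ ≤ 1 / 4 := by
    intro z hz
    rw [mem_ball] at hz
    have h1 := norm_sub_le_of_injOn_of_omits hε hΦ hinj (a := a)
      (fun u hu hua ↦ ha (by rw [← hua, hfΦ u hu]; exact hu)) (z := z) (by linarith)
    have h2 : dist z x / ε ≤ 1 / 32000 := by
      rw [div_le_iff₀ hε]
      linarith
    have h3 : ‖y - a‖ ≤ 2 * ‖y‖ := by linarith [norm_sub_le y a]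
    have hy' : 0 < ‖y‖ := norm_pos_iff.2 hy
    rw [div_sub_one hy, norm_div, div_le_iff₀ hy', ← hΦx]
    rw [hΦx] at h1 ⊢
    calc ‖Φ z - y‖ ≤ 4000 * (dist z x / ε) * ‖y - a‖ := h1
      _ ≤ 4000 * (1 / 32000) * (2 * ‖y‖) := by gcongr
      _ = _ := by ring
  have hy1 : Φ x / y = 1 := by rw [hΦx, div_self hy]
  have hslit : ∀ z ∈ ball x (ε / 32000), Φ z / y ∈ Complex.slitPlane := fun z hz ↦ by
    have := Complex.mem_slitPlane_of_norm_lt_one ((hsmall z hz).trans_lt (by norm_num))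
    rwa [add_sub_cancel] at this
  refine ⟨fun z ↦ Complex.log y + Complex.log (Φ z / y), ?_, ?_, fun z hz ↦ ⟨?_, ?_⟩⟩
  · exact (((hΦ.mono hsub).div_const y).clog hslit).const_add _
  · simp only [hy1, Complex.log_one, add_zero, Complex.exp_log hy]
  · have hne := Complex.slitPlane_ne_zero (hslit z hz)
    rw [Complex.exp_add, Complex.exp_log hy, Complex.exp_log hne, mul_div_cancel₀ _ hy,
      hfΦ z (hsub hz), id]
  · have h1 := Complex.norm_log_one_add_half_le_self ((hsmall z hz).trans (by norm_num))
    rw [add_sub_cancel] at h1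
    simp only [hy1, Complex.log_one, add_zero, add_sub_cancel_left]
    linarith [hsmall z hz]

/-- Pulling back a disc along an orbit segment near infinity in logarithmic coordinates. -/
theorem exists_log_inverse_iterate (hf : TranscendentalEntire f) (hcov : IsCoveringMapOn f Sᶜ)
    (hS : ∀ z ∈ S, ‖z‖ ≤ Real.exp h₀) (hf0 : ‖f 0‖ ≤ Real.exp h₀) {L ε : ℝ} {b : ℂ}
    (hL : Real.exp (h₀ + 1001) ≤ L) (hε : 0 < ε) (hεb : 2 * ε ≤ dist (f 0) (f b)) (hbL : ‖b‖ ≤ L)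
    {J n : ℕ} {w : ℂ} (hJn : J ≤ n) (hprev : ∀ i, 1 ≤ i → i ≤ J → L < ‖f^[n - i] w‖)
    (hdisj : ∀ z ∈ ball (f^[n] w) ε, z ∉ S) {i : ℕ} (hi : 1 ≤ i) (hiJ : i ≤ J) :
    ∃ ψ : ℂ → ℂ, DifferentiableOn ℂ ψ (ball (f^[n] w) (ε / 32000)) ∧
      Complex.exp (ψ (f^[n] w)) = f^[n - i] w ∧
      ∀ z ∈ ball (f^[n] w) (ε / 32000), f^[i] (Complex.exp (ψ z)) = z ∧
        h₀ + 1000 ≤ (ψ z).re ∧ ‖ψ z - ψ (f^[n] w)‖ ≤ 1 := by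
  have hL0 : 0 < L := (Real.exp_pos _).trans_le hL
  have hne : ∀ i, 1 ≤ i → i ≤ J → f^[n - i] w ≠ 0 := fun i hi hiJ ↦
    norm_pos_iff.1 (hL0.trans (hprev i hi hiJ))
  have hT : ∀ z : ℂ, Real.exp h₀ < ‖z‖ → z ∈ Sᶜ := fun z hz hzS ↦
    absurd (hS z hzS) (not_le.2 hz)
  have hstep : ∀ i, 1 ≤ i → i ≤ J → f (f^[n - i] w) = f^[n - (i - 1)] w := fun i hi hiJ ↦ by
    rw [← Function.iterate_succ_apply' f]
    congr 2
    omega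
  have hx := mem_ball_self (x := f^[n] w) (show 0 < ε / 32000 by positivity)
  have hre : ∀ i, 1 ≤ i → i ≤ J → ∀ ψ : ℂ → ℂ, Complex.exp (ψ (f^[n] w)) = f^[n - i] w →
      ∀ z, ‖ψ z - ψ (f^[n] w)‖ ≤ 1 → h₀ + 1000 ≤ (ψ z).re := by
    intro i hi hiJ ψ hψ z hz
    have h1 := hL.trans_lt (hprev i hi hiJ)
    rw [← hψ, Complex.norm_exp, Real.exp_lt_exp] at h1
    have h2 := (abs_le.1 ((Complex.abs_re_le_norm _).trans hz)).1
    rw [Complex.sub_re] at h2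
    linarith
  induction i, hi using Nat.le_induction with
  | base =>
    obtain ⟨a, haL, ha⟩ : ∃ a : ℂ, ‖a‖ ≤ L ∧ f a ∉ ball (f^[n] w) ε := by
      by_contra! hcon
      have h1 := mem_ball.1 (hcon 0 (by simpa using hL0.le))
      have h2 := mem_ball.1 (hcon b hbL)
      linarith [dist_triangle_right (f 0) (f b) (f^[n] w)]
    obtain ⟨ψ, hψ, hψx, hprop⟩ := exists_log_inverse_branch_ball hf.1 hcov hε hdisj
      (hne 1 le_rfl hiJ) (hstep 1 le_rfl hiJ) ha (haL.trans (hprev 1 le_rfl hiJ).le)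
    exact ⟨ψ, hψ, hψx, fun z hz ↦ ⟨(hprop z hz).1, hre 1 le_rfl hiJ ψ hψx z (hprop z hz).2,
      (hprop z hz).2⟩⟩
  | succ i hi ih =>
    obtain ⟨ψ, hψ, hψx, hprop⟩ := ih (by omega)
    have hreψ : ∀ z ∈ ball (f^[n] w) (ε / 32000), h₀ < (ψ z).re := fun z hz ↦ by
      linarith [(hprop z hz).2.1]
    obtain ⟨G, hG, hGx, hfG, -, hder⟩ := exists_log_inverse_branch hf hcov hT hf0
      (hreψ _ hx) (η₀ := Complex.log (f^[n - (i + 1)] w)) (by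
        rw [Complex.exp_log (hne (i + 1) (by omega) hiJ), hψx, hstep (i + 1) (by omega) hiJ,
          Nat.add_sub_cancel])
    have hopen : IsOpen {ζ : ℂ | h₀ < ζ.re} := isOpen_lt continuous_const Complex.continuous_re
    have hGψx : Complex.exp (G (ψ (f^[n] w))) = f^[n - (i + 1)] w := by
      rw [hGx, Complex.exp_log (hne (i + 1) (by omega) hiJ)]
    have hcontr : ∀ z ∈ ball (f^[n] w) (ε / 32000), ‖G (ψ z) - G (ψ (f^[n] w))‖ ≤ 1 := by
      intro z hz
      have hlt : ∀ ζ : ℂ, h₀ + 1000 ≤ ζ.re → h₀ < ζ.re := fun ζ hζ ↦ by linarith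
      have := (convex_halfSpace_re_ge (h₀ + 1000)).norm_image_sub_le_of_norm_deriv_le (f := G)
        (C := 1) (fun ζ hζ ↦ hG.differentiableAt (hopen.mem_nhds (hlt ζ hζ)))
        (fun ζ hζ ↦ by
          have h1 : h₀ + 1000 ≤ ζ.re := hζ
          nlinarith [hder ζ (hlt ζ hζ), norm_nonneg (deriv G ζ)])
        (hprop _ hx).2.1 (hprop z hz).2.1
      linarith [(hprop z hz).2.2]
    exact ⟨fun z ↦ G (ψ z), hG.comp hψ hreψ, hGψx, fun z hz ↦
      ⟨by rw [Function.iterate_succ_apply, hfG _ (hreψ z hz), (hprop z hz).1],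
        hre (i + 1) (by omega) hiJ (fun z ↦ G (ψ z)) hGψx z (hcontr z hz), hcontr z hz⟩⟩

/-- If the disc about `f^[n] w` avoids the singular set and the orbit of `w` makes a long excursion
near infinity before time `n`, then `f^[n]` has an inverse branch on a disc of definite size. -/
theorem exists_inverse_iterate (hf : TranscendentalEntire f) (hcov : IsCoveringMapOn f Sᶜ)
    (hS : ∀ z ∈ S, ‖z‖ ≤ Real.exp h₀) (hf0 : ‖f 0‖ ≤ Real.exp h₀) {L ε : ℝ} {b : ℂ}
    (hL : Real.exp (h₀ + 1001) ≤ L) (hε : 0 < ε) (hε1 : ε ≤ 1)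
    (hεb : 2 * ε ≤ dist (f 0) (f b)) (hbL : ‖b‖ ≤ L) {J n : ℕ} {w : ℂ} (hJ : 1 ≤ J) (hJn : J ≤ n)
    (hP : ∀ z ∈ PostsingularSet f S, Real.exp h₀ ≤ ‖z‖ → L + 2 ≤ ‖f^[J] z‖)
    (hn : ‖f^[n] w‖ ≤ L) (hprev : ∀ i, 1 ≤ i → i ≤ J → L < ‖f^[n - i] w‖)
    (hdisj : ∀ z ∈ ball (f^[n] w) ε, z ∉ S) :
    ∃ Φ : ℂ → ℂ, DifferentiableOn ℂ Φ (ball (f^[n] w) (ε / 32000)) ∧ Φ (f^[n] w) = w ∧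
      ∀ z ∈ ball (f^[n] w) (ε / 32000), f^[n] (Φ z) = z := by
  obtain ⟨ψ, hψ, hψx, hprop⟩ := exists_log_inverse_iterate hf hcov hS hf0 hL hε hεb hbL hJn hprev
    hdisj hJ le_rfl
  have hx := mem_ball_self (x := f^[n] w) (show 0 < ε / 32000 by positivity)
  have key : ∀ i, J + i ≤ n → ∃ Φ : ℂ → ℂ,
      DifferentiableOn ℂ Φ (ball (f^[n] w) (ε / 32000)) ∧ Φ (f^[n] w) = f^[n - (J + i)] w ∧
      ∀ z ∈ ball (f^[n] w) (ε / 32000), f^[i] (Φ z) = Complex.exp (ψ z) := by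
    intro i
    induction i with
    | zero => exact fun _ ↦ ⟨fun z ↦ Complex.exp (ψ z), hψ.cexp, hψx, fun z _ ↦ rfl⟩
    | succ i ih =>
      intro hi
      obtain ⟨Φ, hΦ, hΦx, hΦi⟩ := ih (by omega)
      have hmaps : MapsTo Φ (ball (f^[n] w) (ε / 32000)) Sᶜ := by
        intro z hz hzS
        have h1 : Complex.exp (ψ z) ∈ PostsingularSet f S := by
          rw [← hΦi z hz]
          exact subset_closure (mem_iUnion.2 ⟨i, mem_image_of_mem _ hzS⟩)
        have h2 := hP _ h1 (by
          rw [Complex.norm_exp, Real.exp_le_exp]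
          linarith [(hprop z hz).2.1])
        rw [(hprop z hz).1] at h2
        have h3 := norm_le_norm_add_norm_sub' z (f^[n] w)
        rw [← dist_eq_norm] at h3
        linarith [mem_ball.1 hz]
      obtain ⟨Ψ, hΨ, hΨx, hfΨ⟩ := exists_holomorphic_lift hf.1 hcov isOpen_ball
        (convex_ball _ _) hΦ hmaps hx (e := f^[n - (J + (i + 1))] w) (by
          rw [hΦx, ← Function.iterate_succ_apply' f]
          congr 2
          omega)
      exact ⟨Ψ, hΨ, hΨx, fun z hz ↦ by
        rw [Function.iterate_succ_apply, hfΨ z hz, hΦi z hz]⟩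
  obtain ⟨Φ, hΦ, hΦx, hΦi⟩ := key (n - J) (by omega)
  refine ⟨Φ, hΦ, by rw [hΦx, Nat.add_sub_cancel' hJn, Nat.sub_self]; rfl, fun z hz ↦ ?_⟩
  conv_lhs => rw [← Nat.add_sub_cancel' hJn, Function.iterate_add_apply, hΦi z hz]
  exact (hprop z hz).1

end PullBack

/-- The Fatou set is open. -/
theorem isOpen_fatouSet (f : ℂ → ℂ) : IsOpen (FatouSet f) := by
  refine isOpen_iff_mem_nhds.2 fun z ⟨N, hN, hz, h⟩ ↦ ?_
  exact mem_of_superset (hN.mem_nhds hz) fun x hx ↦ ⟨N, hN, hx, h⟩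

theorem TranscendentalEntire.exists_apply_ne {f : ℂ → ℂ} (hf : TranscendentalEntire f) :
    ∃ b, f 0 ≠ f b := by
  by_contra! h
  exact hf.2 ⟨Polynomial.C (f 0), fun z ↦ by simp [h z]⟩

/-- If no subsequence of an orbit accumulates at a point of a compact set immediately after
visits near infinity, then the orbit stays away from that set after such visits. -/
theorem exists_le_dist_of_no_accumulation {f : ℂ → ℂ} {S : Set ℂ} (hS : IsCompact S) {w : ℂ}
    (h : ¬ ∃ s ∈ S, ∃ n : ℕ → ℕ, Tendsto n atTop atTop ∧ (∀ k, 1 ≤ n k) ∧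
      Tendsto (fun k ↦ f^[n k] w) atTop (𝓝 s) ∧
      Tendsto (fun k ↦ ‖f^[n k - 1] w‖) atTop atTop) :
    ∃ k : ℕ, ∀ n, k ≤ n → 1 ≤ n → (k : ℝ) ≤ ‖f^[n - 1] w‖ →
      ∀ s ∈ S, 1 / ((k : ℝ) + 1) ≤ dist (f^[n] w) s := by
  by_contra! hcon
  choose n hkn hn hlarge s hs hdist using hcon
  obtain ⟨s₀, hs₀, φ, hφ, hlim⟩ := hS.tendsto_subseq hs
  have hdist0 : Tendsto (fun k ↦ dist (s (φ k)) (f^[n (φ k)] w)) atTop (𝓝 0) := by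
    refine squeeze_zero (fun _ ↦ dist_nonneg) (fun k ↦ ?_)
      (tendsto_one_div_add_atTop_nhds_zero_nat.comp hφ.tendsto_atTop)
    rw [dist_comm]
    exact (hdist (φ k)).le
  refine h ⟨s₀, hs₀, fun k ↦ n (φ k), ?_, fun k ↦ hn _, hlim.congr_dist hdist0, ?_⟩
  · exact tendsto_atTop_mono (fun k ↦ hkn (φ k)) hφ.tendsto_atTop
  · exact tendsto_atTop_mono (fun k ↦ hlarge (φ k))
      (tendsto_natCast_atTop_atTop.comp hφ.tendsto_atTop)

/-- An inverse branch of `f^[n]` fixing an unbounded orbit has small distortion, so the images of a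
disc about the starting point contain a disc of definite size. -/
theorem ball_subset_image_iterate {f : ℂ → ℂ} (hf : Continuous f) {w : ℂ} {L r δ ρ : ℝ} {n : ℕ}
    (hn1 : 1 ≤ n) (hr : 0 < r) (hr1 : r ≤ 1) (hwL : ‖w‖ ≤ L)
    (hn : ‖f^[n] w‖ ≤ L) (hunb : ∀ B, ∃ m, B < ‖f^[m] w‖) {Φ : ℂ → ℂ}
    (hΦ : DifferentiableOn ℂ Φ (ball (f^[n] w) r)) (hΦn : Φ (f^[n] w) = w)
    (hfΦ : ∀ z ∈ ball (f^[n] w) r, f^[n] (Φ z) = z) (hρr : 2000 * ρ ≤ r)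
    (hρδ : 4000 * ρ * (2 * L + 1) ≤ r * δ) :
    ball (f^[n] w) ρ ⊆ f^[n] '' ball w δ := by
  have hL : 0 ≤ L := (norm_nonneg w).trans hwL
  obtain ⟨a, ha, hΦa⟩ : ∃ a ∈ closedBall (0 : ℂ) (L + 1), ∀ z ∈ ball (f^[n] w) r, Φ z ≠ a := by
    by_contra! hcon
    have hmaps : MapsTo f^[n] (closedBall 0 (L + 1)) (closedBall 0 (L + 1)) := by
      intro a ha
      obtain ⟨z, hz, rfl⟩ := hcon a ha
      rw [hfΦ z hz, mem_closedBall_zero_iff]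
      have h3 := norm_le_norm_add_norm_sub' z (f^[n] w)
      rw [← dist_eq_norm] at h3
      linarith [mem_ball.1 hz]
    obtain ⟨B, hB⟩ := exists_norm_iterate_le_of_mapsTo hf hn1 hmaps (hwL.trans (by linarith))
    obtain ⟨m, hm⟩ := hunb B
    exact absurd (hB m) (not_le.2 hm)
  have hinj : InjOn Φ (ball (f^[n] w) r) := fun u hu v hv huv ↦ by
    have := hfΦ u hu
    rw [huv, hfΦ v hv] at this
    exact this.symm
  intro z hz
  rw [mem_ball] at hz
  have hzr : z ∈ ball (f^[n] w) r := mem_ball.2 (by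
    linarith [dist_nonneg (x := z) (y := f^[n] w)])
  refine ⟨Φ z, mem_ball_iff_norm.2 ?_, hfΦ z hzr⟩
  have h1 := norm_sub_le_of_injOn_of_omits hr hΦ hinj hΦa (z := z) (by linarith)
  rw [hΦn] at h1
  have h2 : ‖w - a‖ ≤ 2 * L + 1 := by
    linarith [norm_sub_le w a, mem_closedBall_zero_iff.1 ha]
  calc ‖Φ z - w‖ ≤ 4000 * (dist z (f^[n] w) / r) * ‖w - a‖ := h1
    _ ≤ 4000 * (dist z (f^[n] w) / r) * (2 * L + 1) := by gcongr
    _ < 4000 * (ρ / r) * (2 * L + 1) := by gcongr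
    _ = 4000 * ρ * (2 * L + 1) / r := by ring
    _ ≤ δ := by rwa [div_le_iff₀' hr]

/-- **Theorem (Statement 9).** Let `f ∈ B`, and assume the iterates of `f` tend to infinity
uniformly on `{z ∈ P(f) : |z| ≥ R}` for some `R > 0`. If `W` is a wandering domain of `f`
for which `∞` is a limit function and `w ∈ W`, then there are `s ∈ S(f)` and a sequence
`n_k → ∞` with `f^{n_k}(w) → s` and `f^{n_k − 1}(w) → ∞`. -/
theorem wandering_accumulates_on_singular_value
    (f : ℂ → ℂ) (S : Set ℂ)
    (hf : TranscendentalEntire f)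
    (hS : IsSingularValueSet f S)
    (hSbdd : Bornology.IsBounded S)
    (R : ℝ) (hR : 0 < R)
    (hesc : ∀ M : ℝ, ∃ N : ℕ, ∀ n ≥ N, ∀ z ∈ PostsingularSet f S, R ≤ ‖z‖ → M ≤ ‖f^[n] z‖)
    (W : Set ℂ) (hW : IsWanderingDomain f W)
    (w : ℂ) (hw : w ∈ W)
    (hinf : ∃ m : ℕ → ℕ, Tendsto m atTop atTop ∧
      Tendsto (fun j => ‖f^[m j] w‖) atTop atTop) :
    ∃ s ∈ S, ∃ n : ℕ → ℕ, Tendsto n atTop atTop ∧ (∀ k, 1 ≤ n k) ∧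
      Tendsto (fun k => f^[n k] w) atTop (𝓝 s) ∧
      Tendsto (fun k => ‖f^[n k - 1] w‖) atTop atTop := by
  obtain ⟨⟨z₀, hz₀, rfl⟩, hdisjoint⟩ := hW
  have hwF : w ∈ FatouSet f := connectedComponentIn_subset _ _ hw
  obtain ⟨δ, hδ, hδW⟩ :=
    Metric.isOpen_iff.1 (isOpen_fatouSet f).connectedComponentIn w hw
  have hcont : Continuous f := hf.1.continuous
  obtain ⟨m, hm, hmlim⟩ := hinf
  have hunb : ∀ B : ℝ, ∀ n₁, ∃ n ≥ n₁, B < ‖f^[n] w‖ := fun B n₁ ↦ by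
    obtain ⟨j, hj1, hj2⟩ :=
      ((tendsto_atTop.1 hm n₁).and (hmlim.eventually (eventually_gt_atTop B))).exists
    exact ⟨m j, hj1, hj2⟩
  obtain ⟨b, hb⟩ := hf.exists_apply_ne
  by_contra hcon
  obtain ⟨k, hk⟩ := exists_le_dist_of_no_accumulation
    (Metric.isCompact_of_isClosed_isBounded hS.1 hSbdd) hcon
  obtain ⟨B, hB⟩ := hSbdd.exists_norm_le
  obtain ⟨h₀, hh₀⟩ : ∃ h₀, Real.exp h₀ = max R (max B ‖f 0‖) :=
    ⟨_, Real.exp_log (lt_max_of_lt_left hR)⟩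
  have hRh : R ≤ Real.exp h₀ := hh₀ ▸ le_max_left _ _
  have hf0 : ‖f 0‖ ≤ Real.exp h₀ := hh₀ ▸ (le_max_right _ _).trans (le_max_right _ _)
  have hSh : ∀ z ∈ S, ‖z‖ ≤ Real.exp h₀ := fun z hz ↦
    (hB z hz).trans (hh₀ ▸ (le_max_left _ _).trans (le_max_right _ _))
  obtain ⟨L₀, hL₀⟩ : ∃ L₀ : ℝ, ∀ n₁, ∃ n ≥ n₁, ‖f^[n] w‖ ≤ L₀ := by
    by_contra! hesc'
    refine not_tendsto_norm_of_mem_fatouSet hf hS.2.1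
      (fun z hz hzS ↦ absurd (hSh z hzS) (not_le.2 hz)) hf0 hwF (tendsto_atTop.2 fun C ↦ ?_)
    obtain ⟨n₁, hn₁⟩ := hesc' C
    filter_upwards [eventually_ge_atTop n₁] with n hn using (hn₁ n hn).le
  obtain ⟨L, hL⟩ :=
    Finset.exists_le ({L₀, ‖w‖, ‖b‖, (k : ℝ), Real.exp (h₀ + 1001)} : Finset ℝ)
  simp only [Finset.mem_insert, Finset.mem_singleton, forall_eq_or_imp, forall_eq] at hL
  obtain ⟨hL₀L, hwL, hbL, hkL, hexpL⟩ := hL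
  have hLnn : 0 ≤ L := (norm_nonneg w).trans hwL
  obtain ⟨N, hN⟩ := hesc (L + 2)
  have hJ : 1 ≤ max N 1 := le_max_right _ _
  obtain ⟨ε, hε, hεk, hε1, hεb⟩ : ∃ ε : ℝ, 0 < ε ∧ ε ≤ 1 / ((k : ℝ) + 1) ∧ ε ≤ 1 ∧
      2 * ε ≤ dist (f 0) (f b) := by
    have hd : 0 < dist (f 0) (f b) := dist_pos.2 hb
    refine ⟨min (1 / ((k : ℝ) + 1)) (min 1 (dist (f 0) (f b) / 2)), by positivity,
      min_le_left _ _, (min_le_right _ _).trans (min_le_left _ _), ?_⟩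
    linarith [(min_le_right (1 / ((k : ℝ) + 1)) (min 1 (dist (f 0) (f b) / 2))).trans
      (min_le_right _ _)]
  obtain ⟨ρ, hρ, hρr, hρδ⟩ : ∃ ρ : ℝ, 0 < ρ ∧ 2000 * ρ ≤ ε / 32000 ∧
      4000 * ρ * (2 * L + 1) ≤ ε / 32000 * δ := by
    refine ⟨min (ε / 32000 / 2000) (ε / 32000 * δ / (4000 * (2 * L + 1))), by positivity, ?_, ?_⟩
    · linarith [min_le_left (ε / 32000 / 2000) (ε / 32000 * δ / (4000 * (2 * L + 1)))]
    · have := min_le_right (ε / 32000 / 2000) (ε / 32000 * δ / (4000 * (2 * L + 1)))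
      rw [le_div_iff₀ (by positivity)] at this
      linarith
  have hgood : ∀ n₁, ∃ n ≥ n₁, ‖f^[n] w‖ ≤ L ∧
      ball (f^[n] w) ρ ⊆ f^[n] '' connectedComponentIn (FatouSet f) z₀ := by
    intro n₁
    obtain ⟨n, hn, hJn, hnL, hprev⟩ := exists_return_time hcont (L := L)
      (fun n₁ ↦ (hL₀ n₁).imp fun n h ↦ ⟨h.1, h.2.trans hL₀L⟩) hunb (max N 1) (max n₁ k)
    have hdisj : ∀ z ∈ ball (f^[n] w) ε, z ∉ S := fun z hz hzS ↦ by
      have := hk n ((le_max_right _ _).trans hn) (hJ.trans hJn)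
        (hkL.trans (hprev 1 le_rfl hJ).le) z hzS
      linarith [mem_ball'.1 hz]
    obtain ⟨Φ, hΦ, hΦn, hfΦ⟩ := exists_inverse_iterate hf hS.2.1 hSh hf0 hexpL hε hε1 hεb hbL hJ
      hJn (fun z hz hzR ↦ hN _ (le_max_left _ _) z hz (hRh.trans hzR)) hnL hprev hdisj
    exact ⟨n, (le_max_left _ _).trans hn, hnL, (ball_subset_image_iterate hcont (hJ.trans hJn)
      (by positivity) (by linarith) hwL hnL (fun B ↦ (hunb B 0).imp fun _ h ↦ h.2) hΦ hΦn hfΦ hρr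
      hρδ).trans (image_mono hδW)⟩
  choose g hg hgL hgball using hgood
  obtain ⟨p, -, φ, hφ, hlim⟩ := tendsto_subseq_of_bounded
    (isBounded_closedBall (x := (0 : ℂ)) (r := L)) (x := fun j ↦ f^[g j] w)
    fun j ↦ by simpa using hgL j
  obtain ⟨j, hj⟩ := eventually_atTop.1 (hlim.eventually (ball_mem_nhds p (half_pos hρ)))
  set i := max j (g (φ j) + 1) with hi
  have hij : f^[g (φ i)] w ∈ ball (f^[g (φ j)] w) ρ := by
    have h1 := mem_ball.1 (hj j le_rfl)
    have h2 := mem_ball.1 (hj i (le_max_left _ _))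
    have h3 := dist_triangle_right (f^[g (φ i)] w) (f^[g (φ j)] w) p
    simp only [Function.comp_apply] at h1 h2
    rw [mem_ball]
    linarith
  have hne : g (φ j) ≠ g (φ i) := by
    have h1 : g (φ j) + 1 ≤ i := le_max_right _ _
    have h2 := hφ.le_apply (x := i)
    have h3 := hg (φ i)
    omega
  have hmem := hdisjoint (g (φ j)) (g (φ i)) hne
  exact (eq_empty_iff_forall_notMem.1 hmem) _ ⟨hgball _ hij, mem_image_of_mem _ hw⟩
end

section
/- Let f ∈ B_ℝ. Then for all sufficiently large M > 0, the set A := ⋃_{σ∈Σ(f)} σ·[M,∞) ⊂ ℝ satisfies A ⊂ I(f) and f(A) ⊂ A, where I(f) = {z ∈ ℂ : fⁿ(z) → ∞} is the escaping set of f. -/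
/-!
Formalization of: "Absence of wandering domains for functions in class B whose
singular values escape uniformly, under a thickness condition along an invariant set A."
-/

open Set Metric Filter Topology

/-- `σ ∈ Σ(f)`: there is a real singular value `s ∈ S(f) ∩ ℝ` and a sequence `n_j → ∞`
with `f^{n_j}(s) → σ·∞`. (Here `σ = ±1`.) -/
def MemSigma (f : ℂ → ℂ) (S : Set ℂ) (σ : ℝ) : Prop :=
  ∃ s ∈ S, s.im = 0 ∧ ∃ n : ℕ → ℕ, Tendsto n atTop atTop ∧
    Tendsto (fun j => σ * (f^[n j] s).re) atTop atTop

/-- The escaping set `I(f)`. -/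
def EscapingSet (f : ℂ → ℂ) : Set ℂ :=
  {z : ℂ | Tendsto (fun n => ‖f^[n] z‖) atTop atTop}

/-- The right half-plane `{z | b < Re z}`. -/
def rightHalfPlane (b : ℝ) : Set ℂ := {z : ℂ | b < z.re}

theorem isOpen_rightHalfPlane (b : ℝ) : IsOpen (rightHalfPlane b) :=
  isOpen_lt continuous_const Complex.continuous_re

theorem convex_rightHalfPlane (b : ℝ) : Convex ℝ (rightHalfPlane b) :=
  convex_halfSpace_re_gt b

theorem IsCoveringMapOn.eqOn_of_lift {X E A : Type*} [TopologicalSpace X] [TopologicalSpace E]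
    [TopologicalSpace A] [LocallyPathConnectedSpace A] {f : E → X} {s : Set X}
    (hf : IsCoveringMapOn f s) {U : Set A} (hU : IsOpen U) (hUs : IsSimplyConnected U)
    {φ ψ : A → E} (hφ : ContinuousOn φ U) (hψ : ContinuousOn ψ U)
    (hs : ∀ a ∈ U, f (φ a) ∈ s) (h : ∀ a ∈ U, f (φ a) = f (ψ a))
    {a₀ : A} (ha₀ : a₀ ∈ U) (h₀ : φ a₀ = ψ a₀) : EqOn φ ψ U := by
  have := hUs.simplyConnectedSpace
  have := hU.locallyPathConnectedSpace
  have hφ' := continuousOn_iff_continuous_domRestrict.mp hφ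
  have hψ' := continuousOn_iff_continuous_domRestrict.mp hψ
  have hc : Continuous fun a : U => f (φ a) :=
    hf.continuousOn.comp_continuous hφ' fun a => hs a a.2
  obtain ⟨F, -, huniq⟩ := hf.existsUnique_continuousMap_lifts ⟨fun a : U => f (φ a), hc⟩
    (a₀ := ⟨a₀, ha₀⟩) (e₀ := φ a₀) rfl fun a => hs a a.2
  have h1 := huniq ⟨U.domRestrict φ, hφ'⟩ ⟨rfl, rfl⟩
  have h2 := huniq ⟨U.domRestrict ψ, hψ'⟩ ⟨h₀.symm, funext fun a => (h a a.2).symm⟩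
  intro a ha
  exact congrArg (fun g : C(U, E) => g ⟨a, ha⟩) (h1.trans h2.symm)

theorem IsCoveringMapOn.exists_lift {X E A : Type*} [TopologicalSpace X] [TopologicalSpace E]
    [TopologicalSpace A] [LocallyPathConnectedSpace A] {f : E → X} {s : Set X}
    (hf : IsCoveringMapOn f s) {U : Set A} (hU : IsOpen U) (hUs : IsSimplyConnected U)
    {g : A → X} (hg : ContinuousOn g U) (hs : ∀ a ∈ U, g a ∈ s)
    {a₀ : A} (ha₀ : a₀ ∈ U) {e₀ : E} (h₀ : f e₀ = g a₀) :
    ∃ φ : A → E, ContinuousOn φ U ∧ φ a₀ = e₀ ∧ ∀ a ∈ U, f (φ a) = g a := by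
  classical
  have := hUs.simplyConnectedSpace
  have := hU.locallyPathConnectedSpace
  obtain ⟨F, ⟨hF₀, hF⟩, -⟩ := hf.existsUnique_continuousMap_lifts
    ⟨U.domRestrict g, continuousOn_iff_continuous_domRestrict.mp hg⟩
    (a₀ := ⟨a₀, ha₀⟩) (e₀ := e₀) h₀ fun a => hs a a.2
  refine ⟨fun a => if ha : a ∈ U then F ⟨a, ha⟩ else e₀, ?_, by simp [ha₀, hF₀], ?_⟩
  · rw [continuousOn_iff_continuous_domRestrict]
    convert! map_continuous F
    simp
  · intro a ha
    simpa [ha] using congrFun hF ⟨a, ha⟩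

theorem isSimplyConnected_rightHalfPlane (b : ℝ) : IsSimplyConnected (rightHalfPlane b) := by
  have : ContractibleSpace (rightHalfPlane b) :=
    (convex_rightHalfPlane b).contractibleSpace ⟨(b + 1 : ℝ), by simp [rightHalfPlane]⟩
  exact (inferInstance : SimplyConnectedSpace (rightHalfPlane b))

/-- A continuous solution of `f (φ z) = ε * exp z`, with `f` entire, is holomorphic. -/
theorem differentiableOn_of_comp_eq_exp {f φ : ℂ → ℂ} {U : Set ℂ} {ε : ℂ}
    (hf : Differentiable ℂ f) (hU : IsOpen U) (hε : ε ≠ 0) (hφ : ContinuousOn φ U)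
    (h : ∀ z ∈ U, f (φ z) = ε * Complex.exp z) : DifferentiableOn ℂ φ U := by
  have key : ∀ z ∈ U, deriv f (φ z) ≠ 0 → DifferentiableAt ℂ φ z := by
    intro z hz hd
    have hs : HasStrictDerivAt f (deriv f (φ z)) (φ z) :=
      (hf.analyticAt (φ z)).hasStrictDerivAt
    have hc := hφ.continuousAt (hU.mem_nhds hz)
    have h1 : ∀ᶠ w in 𝓝 z, hs.localInverse f _ _ hd (f (φ w)) = φ w :=
      hc.eventually (hs.hasStrictFDerivAt_equiv hd).eventually_left_inverse
    have h2 : DifferentiableAt ℂ (hs.localInverse f _ _ hd) (f (φ z)) :=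
      (hs.to_localInverse hd).hasDerivAt.differentiableAt
    rw [h z hz] at h2
    have h3 : DifferentiableAt ℂ (fun w => hs.localInverse f _ _ hd (ε * Complex.exp w)) z :=
      DifferentiableAt.comp z h2 (by fun_prop)
    refine h3.congr_of_eventuallyEq ?_
    filter_upwards [h1, hU.mem_nhds hz] with w hw hwU
    rw [← h w hwU, hw]
  intro z hz
  have hc := hφ.continuousAt (hU.mem_nhds hz)
  have hinj : ∀ᶠ w in 𝓝[≠] z, φ w ≠ φ z := by
    have he : HasDerivAt (fun w => ε * Complex.exp w) (ε * Complex.exp z) z :=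
      (Complex.hasDerivAt_exp z).const_mul ε
    filter_upwards [he.eventually_ne (c := ε * Complex.exp z)
      (mul_ne_zero hε (Complex.exp_ne_zero z)),
      nhdsWithin_le_nhds (hU.mem_nhds hz)] with w hw hwU heq
    apply hw
    rw [← h w hwU, ← h z hz, heq]
  have hd : ∀ᶠ w in 𝓝[≠] z, deriv f (φ w) ≠ 0 := by
    rcases (hf.analyticAt (φ z)).deriv.eventually_eq_zero_or_eventually_ne_zero with h0 | h0
    · exfalso
      obtain ⟨r, hr, hball⟩ := Metric.eventually_nhds_iff_ball.mp h0
      have hconst : ∀ y ∈ ball (φ z) r, f y = f (φ z) := fun y hy =>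
        (convex_ball (φ z) r).is_const_of_fderivWithin_eq_zero (𝕜 := ℂ) hf.differentiableOn
          (fun x hx => by
            rw [fderivWithin_of_isOpen isOpen_ball hx]
            ext
            simpa using hball x hx) hy (mem_ball_self hr)
      have he : HasDerivAt (fun w => ε * Complex.exp w) (ε * Complex.exp z) z :=
        (Complex.hasDerivAt_exp z).const_mul ε
      have hev : ∀ᶠ w in 𝓝[≠] z, False := by
        filter_upwards [he.eventually_ne (c := ε * Complex.exp z)
          (mul_ne_zero hε (Complex.exp_ne_zero z)),
          nhdsWithin_le_nhds (hU.mem_nhds hz),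
          nhdsWithin_le_nhds (hc.eventually (ball_mem_nhds (φ z) hr))] with w hw hwU hwb
        apply hw
        rw [← h w hwU, ← h z hz, hconst _ hwb]
      exact hev.exists.elim fun _ => id
    · have ht : Tendsto φ (𝓝[≠] z) (𝓝[≠] (φ z)) :=
        tendsto_nhdsWithin_iff.mpr ⟨hc.tendsto.mono_left nhdsWithin_le_nhds, hinj⟩
      exact ht.eventually h0
  refine (Complex.analyticAt_of_differentiable_on_punctured_nhds_of_continuousAt ?_
    hc).differentiableAt.differentiableWithinAt
  filter_upwards [hd, nhdsWithin_le_nhds (hU.mem_nhds hz)] with w hw hwU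
  exact key w hwU hw

/-- An entire function of polynomial growth is a polynomial. -/
theorem Differentiable.exists_polynomial_of_norm_le {f : ℂ → ℂ} (hf : Differentiable ℂ f)
    {C ρ : ℝ} {n : ℕ} (h : ∀ z, ρ < ‖z‖ → ‖f z‖ ≤ C * ‖z‖ ^ n) :
    ∃ p : Polynomial ℂ, ∀ z, f z = p.eval z := by
  have hzero : ∀ m, n < m → iteratedDeriv m f 0 = 0 := by
    intro m hm
    have hb : ∀ᶠ r : ℝ in atTop, ‖iteratedDeriv m f 0‖ ≤ m.factorial * C * r⁻¹ ^ (m - n) := by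
      filter_upwards [eventually_gt_atTop 0, eventually_gt_atTop ρ] with r hr hrρ
      refine (Complex.norm_iteratedDeriv_le_of_forall_mem_sphere_norm_le m hr
        hf.diffContOnCl (C := C * r ^ n) fun z hz => ?_).trans_eq ?_
      · have hz' : ‖z‖ = r := by simpa using hz
        simpa [hz'] using h z (by rw [hz']; exact hrρ)
      · obtain ⟨k, rfl⟩ := Nat.exists_eq_add_of_lt hm
        have : n + k + 1 - n = k + 1 := by omega
        rw [this, inv_pow]
        field_simp
        ring
    have ht : Tendsto (fun r : ℝ => m.factorial * C * r⁻¹ ^ (m - n)) atTop (𝓝 0) := by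
      have := (tendsto_inv_atTop_zero (𝕜 := ℝ)).pow (m - n)
      rw [zero_pow (by omega)] at this
      simpa using this.const_mul (m.factorial * C)
    exact norm_le_zero_iff.mp (ge_of_tendsto ht hb)
  refine ⟨∑ m ∈ Finset.range (n + 1),
    Polynomial.C ((m.factorial : ℂ)⁻¹ * iteratedDeriv m f 0) * Polynomial.X ^ m, fun z => ?_⟩
  rw [← Complex.taylorSeries_eq_of_entire' 0 z hf, tsum_eq_sum (s := Finset.range (n + 1))]
  · simp [Polynomial.eval_finsetSum]
  · intro m hm
    rw [hzero m (by simpa using hm)]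
    simp

/-- An entire function bounded away from zero near infinity is a polynomial. -/
theorem Differentiable.exists_polynomial_of_le_norm {f : ℂ → ℂ} (hf : Differentiable ℂ f)
    {c ρ : ℝ} (hc : 0 < c) (h : ∀ z, ρ < ‖z‖ → c ≤ ‖f z‖) :
    ∃ p : Polynomial ℂ, ∀ z, f z = p.eval z := by
  set F : ℂ → ℂ := fun u => (f u⁻¹)⁻¹ with hF
  have hinv : Tendsto (fun u : ℂ => ‖u⁻¹‖) (𝓝[≠] 0) atTop :=
    tendsto_norm_cobounded_atTop.comp tendsto_inv₀_nhdsNE_zero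
  have hev : ∀ᶠ u in 𝓝[≠] (0 : ℂ), u ≠ 0 ∧ c ≤ ‖f u⁻¹‖ := by
    filter_upwards [hinv.eventually_gt_atTop ρ, self_mem_nhdsWithin] with u hu hu0
    exact ⟨hu0, h _ hu⟩
  have hd : ∀ᶠ u in 𝓝[≠] (0 : ℂ), DifferentiableAt ℂ F u := by
    filter_upwards [hev] with u ⟨hu0, hu⟩
    exact ((hf _).comp u (differentiableAt_inv hu0)).inv (norm_pos_iff.mp (hc.trans_le hu))
  have hlim : Tendsto F (𝓝[≠] 0) (𝓝 (limUnder (𝓝[≠] 0) F)) := by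
    refine Complex.tendsto_limUnder_of_differentiable_on_punctured_nhds_of_bounded_under hd ?_
    refine isBoundedUnder_of_eventually_le (a := c⁻¹ + ‖F 0‖) ?_
    filter_upwards [hev] with u ⟨hu0, hu⟩
    refine (norm_sub_le _ _).trans (add_le_add ?_ le_rfl)
    rw [hF, norm_inv]
    exact inv_anti₀ hc hu
  have hG : AnalyticAt ℂ (Function.update F 0 (limUnder (𝓝[≠] 0) F)) 0 := by
    refine Complex.analyticAt_of_differentiable_on_punctured_nhds_of_continuousAt ?_
      (continuousAt_update_same.mpr hlim)
    filter_upwards [hd, self_mem_nhdsWithin] with u hu hu0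
    refine hu.congr_of_eventuallyEq ?_
    filter_upwards [isOpen_ne.mem_nhds hu0] with v hv
    exact Function.update_of_ne hv _ _
  have hm : MeromorphicAt F 0 := by
    refine hG.meromorphicAt.congr ?_
    filter_upwards [self_mem_nhdsWithin] with v hv
    exact Function.update_of_ne hv _ _
  obtain ⟨n, hn⟩ := hm.inv
  obtain ⟨δ, hδ, hb⟩ := Metric.eventually_nhds_iff_ball.mp
    (hn.continuousAt.norm.eventually (gt_mem_nhds (lt_add_one _)))
  set C := ‖((0 : ℂ) - 0) ^ n • F⁻¹ 0‖ + 1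
  refine hf.exists_polynomial_of_norm_le (C := C) (ρ := δ⁻¹) (n := n) fun z hz => ?_
  have hz0 : 0 < ‖z‖ := (inv_pos.mpr hδ).trans hz
  have := hb z⁻¹ (by simpa using inv_lt_of_inv_lt₀ hδ hz)
  simp only [sub_zero, Pi.inv_apply, hF, inv_inv, norm_smul, norm_pow, norm_inv] at this
  rw [inv_pow, inv_mul_lt_iff₀ (by positivity)] at this
  rw [mul_comm]
  exact this.le

theorem isPreconnected_setOf_lt_norm {ρ : ℝ} (hρ : 0 < ρ) : IsPreconnected {z : ℂ | ρ < ‖z‖} := by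
  have h : {z : ℂ | ρ < ‖z‖} = Complex.exp '' rightHalfPlane (Real.log ρ) := by
    ext z
    constructor
    · intro hz
      have hz0 : 0 < ‖z‖ := hρ.trans hz
      refine ⟨Complex.log z, ?_, Complex.exp_log (norm_pos_iff.mp hz0)⟩
      rw [rightHalfPlane, mem_ofPred_eq, Complex.log_re]
      exact Real.log_lt_log hρ hz
    · rintro ⟨w, hw, rfl⟩
      rw [mem_ofPred_eq, Complex.norm_exp]
      exact (Real.log_lt_iff_lt_exp hρ).mp hw
  rw [h]
  exact (convex_rightHalfPlane _).isPreconnected.image _ Complex.continuous_exp.continuousOn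

/-- If a solution of `f (φ z) = ε * exp z` on a half-plane has an imaginary period, then its image
contains a neighbourhood of infinity, so `f` is bounded away from zero there. -/
theorem exists_le_norm_of_periodic_lift {f φ : ℂ → ℂ} {b T : ℝ} {ε : ℂ} (hf : Continuous f)
    (hε : ‖ε‖ = 1) (hφ : DifferentiableOn ℂ φ (rightHalfPlane b))
    (h : ∀ z ∈ rightHalfPlane b, f (φ z) = ε * Complex.exp z) (hT : 0 < T)
    (hper : ∀ z ∈ rightHalfPlane b, φ (z + T * Complex.I) = φ z) :
    ∃ ρ : ℝ, ∀ z, ρ < ‖z‖ → Real.exp b ≤ ‖f z‖ := by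
  have hnorm : ∀ z ∈ rightHalfPlane b, ‖f (φ z)‖ = Real.exp z.re := fun z hz => by
    rw [h z hz, norm_mul, hε, one_mul, Complex.norm_exp]
  have hsub : rightHalfPlane (b + 1) ⊆ rightHalfPlane b := fun z (hz : b + 1 < z.re) =>
    show b < z.re by linarith
  have hopen : IsOpen (φ '' rightHalfPlane (b + 1)) := by
    rcases (hφ.analyticOnNhd (isOpen_rightHalfPlane b)).is_constant_or_isOpen
      (convex_rightHalfPlane b).isPreconnected with ⟨w, hw⟩ | ho
    · exfalso
      have h1 : ((b + 1 : ℝ) : ℂ) ∈ rightHalfPlane b := by simp [rightHalfPlane]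
      have h2 : ((b + 2 : ℝ) : ℂ) ∈ rightHalfPlane b := by simp [rightHalfPlane]
      have h3 := hnorm _ h1
      rw [hw _ h1, ← hw _ h2, hnorm _ h2, Real.exp_eq_exp] at h3
      norm_num at h3
    · exact ho _ hsub (isOpen_rightHalfPlane _)
  have hcompact : ∀ B, IsCompact (φ '' (Icc (b + 1) B ×ℂ Icc 0 T)) := fun B =>
    (isCompact_Icc.reProdIm isCompact_Icc).image_of_continuousOn
      (hφ.continuousOn.mono fun z hz => show b < z.re by
        have := hz.1.1
        linarith)
  have hperint : ∀ (n : ℤ), ∀ z ∈ rightHalfPlane b, φ (z + n * T * Complex.I) = φ z := by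
    intro n
    have hmem : ∀ (m : ℤ), ∀ z ∈ rightHalfPlane b,
        z + m * T * Complex.I ∈ rightHalfPlane b := fun m z hz => by
      simpa [rightHalfPlane] using hz
    induction n with
    | zero => simp
    | succ n ih =>
      intro z hz
      rw [← ih z hz, ← hper _ (hmem n z hz)]
      congr 1
      push_cast
      ring
    | pred n ih =>
      intro z hz
      rw [← ih z hz, ← hper _ (hmem (-n - 1) z hz)]
      congr 1
      push_cast
      ring
  obtain ⟨ρ₀, hρ₀⟩ := (hcompact (b + 1)).isBounded.exists_norm_le
  set ρ := max ρ₀ 1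
  have hρ : 0 < ρ := lt_max_of_lt_right one_pos
  refine ⟨ρ, ?_⟩
  have hsubset : {z : ℂ | ρ < ‖z‖} ⊆ φ '' rightHalfPlane (b + 1) := by
    refine (isPreconnected_setOf_lt_norm hρ).subset_of_closure_inter_subset hopen ?_ ?_
    · obtain ⟨B, hB⟩ := ((isCompact_closedBall (0 : ℂ) ρ).image hf).isBounded.exists_norm_le
      obtain ⟨t, ht1, ht2⟩ := ((eventually_gt_atTop (b + 1)).and
        (Real.tendsto_exp_atTop.eventually_gt_atTop B)).exists
      have ht : (t : ℂ) ∈ rightHalfPlane (b + 1) := by simpa [rightHalfPlane] using ht1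
      refine ⟨φ t, ?_, mem_image_of_mem φ ht⟩
      by_contra hle
      have := hB _ (mem_image_of_mem f (show φ t ∈ closedBall 0 ρ by simpa using hle))
      rw [hnorm _ (hsub ht), Complex.ofReal_re] at this
      linarith
    · rintro z ⟨hz, hzρ⟩
      set B := Real.log (‖f z‖ + 1)
      have hN : IsOpen {w | ‖f w‖ < ‖f z‖ + 1} := isOpen_lt hf.norm continuous_const
      have hz' := hN.inter_closure ⟨show ‖f z‖ < ‖f z‖ + 1 by linarith, hz⟩
      have hcl : z ∈ φ '' (Icc (b + 1) B ×ℂ Icc 0 T) := by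
        rw [← (hcompact B).isClosed.closure_eq]
        refine closure_mono ?_ hz'
        rintro _ ⟨hw, ζ, hζ, rfl⟩
        rw [mem_ofPred_eq, hnorm ζ (hsub hζ)] at hw
        have him := toIcoMod_mem_Ico' hT ζ.im
        refine ⟨ζ + (-toIcoDiv hT 0 ζ.im : ℤ) * T * Complex.I, ⟨?_, ?_⟩, hperint _ _ (hsub hζ)⟩
        · have hζ' : b + 1 < ζ.re := hζ
          have : ζ.re < B := (Real.lt_log_iff_exp_lt (by positivity)).mpr hw
          simpa using And.intro hζ'.le this.le
        · have : (ζ + (-toIcoDiv hT 0 ζ.im : ℤ) * T * Complex.I).im = toIcoMod hT 0 ζ.im := by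
            have := self_sub_toIcoDiv_zsmul hT 0 ζ.im
            rw [zsmul_eq_mul] at this
            simp
            linarith
          rw [mem_preimage, this]
          exact Ico_subset_Icc_self him
      obtain ⟨ζ, hζ, rfl⟩ := hcl
      rcases hζ.1.1.lt_or_eq with hlt | heq
      · exact mem_image_of_mem φ hlt
      · exfalso
        have := hρ₀ (φ ζ) (mem_image_of_mem φ ⟨⟨heq.le, heq.ge⟩, hζ.2⟩)
        have h2 : ρ < ‖φ ζ‖ := hzρ
        have h3 : ρ₀ ≤ ρ := le_max_left _ _
        linarith
  intro z hz
  obtain ⟨ζ, hζ, rfl⟩ := hsubset hz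
  rw [hnorm ζ (hsub hζ), Real.exp_le_exp]
  exact le_of_lt (hsub hζ)

/-- For a real transcendental entire function, a conjugation-symmetric solution of
`f (φ z) = ε * exp z` on a half-plane takes real values only on the real axis. -/
theorem im_eq_zero_of_im_lift_eq_zero {f φ : ℂ → ℂ} {b : ℝ} {ε : ℂ} (hf : TranscendentalEntire f)
    (hcov : IsCoveringMapOn f {w | Real.exp b < ‖w‖}) (hε : ‖ε‖ = 1)
    (hφ : ContinuousOn φ (rightHalfPlane b))
    (h : ∀ z ∈ rightHalfPlane b, f (φ z) = ε * Complex.exp z)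
    (hconj : ∀ z ∈ rightHalfPlane b, φ (starRingEnd ℂ z) = starRingEnd ℂ (φ z))
    {z : ℂ} (hz : z ∈ rightHalfPlane b) (him : (φ z).im = 0) : z.im = 0 := by
  have hε0 : ε ≠ 0 := norm_pos_iff.mp (by rw [hε]; exact one_pos)
  have hpos : ∀ w ∈ rightHalfPlane b, (φ w).im = 0 → ¬ 0 < w.im := by
    intro w hw hwim hpos
    have hcw : starRingEnd ℂ w ∈ rightHalfPlane b := by simpa [rightHalfPlane] using hw
    have heq : φ (starRingEnd ℂ w) = φ w := by
      rw [hconj w hw]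
      exact Complex.conj_eq_iff_im.mpr hwim
    have hexp : Complex.exp (starRingEnd ℂ w) = Complex.exp w := by
      have := h _ hcw
      rw [heq, h w hw] at this
      exact (mul_left_cancel₀ hε0 this).symm
    set T : ℝ := 2 * w.im
    have hw' : starRingEnd ℂ w + T * Complex.I = w := by
      apply Complex.ext <;> simp [T]
      ring
    have hT : Complex.exp (T * Complex.I) = 1 := by
      have := congrArg Complex.exp hw'
      rw [Complex.exp_add, ← hexp] at this
      exact mul_left_cancel₀ (Complex.exp_ne_zero _) (this.trans (mul_one _).symm)
    have hmaps : MapsTo (fun u : ℂ => u + T * Complex.I) (rightHalfPlane b) (rightHalfPlane b) :=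
      fun u hu => by simpa [rightHalfPlane] using hu
    have hper : EqOn (fun u => φ (u + T * Complex.I)) φ (rightHalfPlane b) := by
      have hval : ∀ u ∈ rightHalfPlane b, f (φ (u + T * Complex.I)) = ε * Complex.exp u :=
        fun u hu => by rw [h _ (hmaps hu), Complex.exp_add, hT, mul_one]
      refine hcov.eqOn_of_lift (isOpen_rightHalfPlane b) (isSimplyConnected_rightHalfPlane b)
        (hφ.comp (by fun_prop) hmaps) hφ (fun u hu => ?_)
        (fun u hu => by rw [hval u hu, h u hu]) hcw (by rw [hw', heq])
      rw [hval u hu, mem_ofPred_eq, norm_mul, hε, one_mul, Complex.norm_exp, Real.exp_lt_exp]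
      exact hu
    obtain ⟨ρ, hρ⟩ := exists_le_norm_of_periodic_lift hf.1.continuous hε
      (differentiableOn_of_comp_eq_exp hf.1 (isOpen_rightHalfPlane b) hε0 hφ h) h
      (T := T) (by positivity) hper
    exact hf.2 (hf.1.exists_polynomial_of_le_norm (Real.exp_pos b) hρ)
  rcases lt_trichotomy z.im 0 with hlt | h0 | hgt
  · refine absurd ?_ (hpos (starRingEnd ℂ z) (by simpa [rightHalfPlane] using hz) ?_)
    · simpa using hlt
    · simp [hconj z hz, him]
  · exact h0
  · exact absurd hgt (hpos z hz him)

/-- A holomorphic map from a disk into the slit plane, real and positive at the centre,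
has derivative at most `4 * x / r` there. -/
theorem norm_deriv_le_of_mapsTo_slitPlane {φ : ℂ → ℂ} {c : ℂ} {x r : ℝ} (hr : 0 < r)
    (hφ : DifferentiableOn ℂ φ (ball c r)) (hs : MapsTo φ (ball c r) Complex.slitPlane)
    (hx : 0 < x) (hc : φ c = x) : ‖deriv φ c‖ ≤ 4 * x / r := by
  set q : ℂ → ℂ := fun z => Complex.exp (Complex.log (φ z) / 2) with hq
  have hqd : DifferentiableOn ℂ q (ball c r) := ((hφ.clog hs).div_const 2).cexp
  have hq2 : ∀ z ∈ ball c r, q z ^ 2 = φ z := fun z hz => by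
    rw [hq, ← Complex.exp_nat_mul]
    push_cast
    rw [mul_div_cancel₀ _ two_ne_zero, Complex.exp_log (Complex.slitPlane_ne_zero (hs hz))]
  have hqre : ∀ z ∈ ball c r, 0 < (q z).re := fun z hz => by
    have harg := (Complex.mem_slitPlane_iff_arg.mp (hs hz)).1
    have h1 := Complex.neg_pi_lt_arg (φ z)
    have h2 := lt_of_le_of_ne (Complex.arg_le_pi (φ z)) harg
    rw [hq, Complex.exp_re]
    refine mul_pos (Real.exp_pos _) (Real.cos_pos_of_mem_Ioo ?_)
    have : (Complex.log (φ z) / 2).im = (φ z).arg / 2 := by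
      rw [Complex.div_ofNat_im, Complex.log_im]
    rw [this]
    constructor <;> linarith
  set y : ℝ := Real.exp (Real.log x / 2)
  have hy : 0 < y := Real.exp_pos _
  have hqc : q c = y := by
    rw [hq]
    simp only [hc]
    rw [← Complex.ofReal_log hx.le]
    simp [y]
  have hyx : y * y = x := by
    rw [← Real.exp_add, add_halves, Real.exp_log hx]
  have hne : ∀ z ∈ ball c r, q z + y ≠ 0 := fun z hz h0 => by
    have h1 := congrArg Complex.re h0
    have h2 := hqre z hz
    simp at h1
    linarith
  have hcb : c ∈ ball c r := mem_ball_self hr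
  have hqD : HasDerivAt q (deriv q c) c :=
    (hqd.differentiableAt (isOpen_ball.mem_nhds hcb)).hasDerivAt
  have hg : ‖deriv (fun z => (q z - y) / (q z + y)) c‖ ≤ 1 / r := by
    refine Complex.norm_deriv_le_div_of_mapsTo_ball
      ((hqd.sub_const _).div (hqd.add_const _) hne) (fun z hz => ?_) hr
    rw [hqc, sub_self, zero_div, mem_closedBall_zero_iff, norm_div]
    refine div_le_one_of_le₀ ?_ (norm_nonneg _)
    rw [← sq_le_sq₀ (norm_nonneg _) (norm_nonneg _), Complex.sq_norm, Complex.sq_norm,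
      Complex.normSq_apply, Complex.normSq_apply]
    have := mul_pos (hqre z hz) hy
    simp
    nlinarith
  have hgD := ((hqD.sub_const (y : ℂ)).div (hqD.add_const (y : ℂ)) (hne c hcb)).deriv
  have hyC : (y : ℂ) ≠ 0 := by exact_mod_cast hy.ne'
  have hgv : deriv (fun z => (q z - y) / (q z + y)) c = deriv q c / (2 * y) := by
    refine hgD.trans ?_
    rw [hqc]
    field_simp
    ring
  have hφv : deriv φ c = 2 * y * deriv q c := by
    have h1 : φ =ᶠ[𝓝 c] fun z => q z ^ 2 := by
      filter_upwards [isOpen_ball.mem_nhds hcb] with z hz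
      exact (hq2 z hz).symm
    rw [h1.deriv_eq, (hqD.fun_pow 2).deriv, hqc]
    simp
  have h2y : ‖(2 * y : ℂ)‖ = 2 * y := by
    simp [abs_of_pos hy]
  rw [hgv, norm_div, h2y, div_le_div_iff₀ (by positivity) hr] at hg
  rw [hφv, norm_mul, h2y, le_div_iff₀ hr]
  nlinarith

theorem IsPreconnected.pos_of_ne_zero {X : Type*} [TopologicalSpace X] {s : Set X}
    (hs : IsPreconnected s) {g : X → ℝ} (hg : ContinuousOn g s) (hne : ∀ x ∈ s, g x ≠ 0)
    {a : X} (ha : a ∈ s) (hpos : 0 < g a) : ∀ x ∈ s, 0 < g x := by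
  intro x hx
  by_contra! hle
  obtain ⟨y, hy, h0⟩ := hs.intermediate_value hx ha hg ⟨hle, hpos.le⟩
  exact hne y hy h0

theorem apply_conj_of_real {f : ℂ → ℂ} (hf : Differentiable ℂ f)
    (hreal : ∀ x : ℝ, (f x).im = 0) (z : ℂ) :
    f (starRingEnd ℂ z) = starRingEnd ℂ (f z) := by
  have hg : Differentiable ℂ (starRingEnd ℂ ∘ f ∘ starRingEnd ℂ) := fun z =>
    differentiableAt_conj_conj_iff.mpr (hf _)
  have hev : ∃ᶠ z in 𝓝[≠] (0 : ℂ), f z = (starRingEnd ℂ ∘ f ∘ starRingEnd ℂ) z := by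
    have ht : Tendsto (fun x : ℝ => (x : ℂ)) (𝓝[≠] 0) (𝓝[≠] 0) := by
      refine tendsto_nhdsWithin_iff.mpr ⟨?_, ?_⟩
      · exact (Complex.continuous_ofReal.tendsto' 0 0 Complex.ofReal_zero).mono_left
          nhdsWithin_le_nhds
      · filter_upwards [self_mem_nhdsWithin] with x hx
        simpa using hx
    refine ht.frequently (Eventually.of_forall fun x => ?_).frequently
    simpa using (Complex.conj_eq_iff_im.mpr (hreal x)).symm
  have := AnalyticOnNhd.eq_of_frequently_eq (fun z _ => hf.analyticAt z)
    (fun z _ => hg.analyticAt z) hev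
  simpa using congrFun this (starRingEnd ℂ z)

/-- For a real transcendental entire function, the real inverse branch through a point where the
modulus exceeds that of all singular values runs to infinity, slower than `exp (t / 2)`. -/
theorem exists_real_inverse_branch {f : ℂ → ℂ} {b : ℝ} (hf : TranscendentalEntire f)
    (hreal : ∀ x : ℝ, (f x).im = 0) (hcov : IsCoveringMapOn f {w | Real.exp b < ‖w‖})
    (h0 : ‖f 0‖ ≤ Real.exp b) {σ : ℝ} (hσ : σ = 1 ∨ σ = -1) {x₀ : ℝ} (hx₀ : 0 < x₀)
    (hfx₀ : Real.exp b < ‖f (σ * x₀ : ℝ)‖) :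
    ∃ y : ℝ → ℝ, ContinuousOn y (Ioi b) ∧ (∀ t ∈ Ioi b, ‖f (σ * y t : ℝ)‖ = Real.exp t) ∧
      (∀ t ∈ Ioi b, 0 < y t) ∧ ∃ C > 0, ∀ t ≥ b + 8, y t ≤ C * Real.exp (t / 2) := by
  have hσσ : σ * σ = 1 := by rcases hσ with rfl | rfl <;> norm_num
  have hσσC : (σ : ℂ) * σ = 1 := by exact_mod_cast hσσ
  set w₀ : ℝ := (f (σ * x₀ : ℝ)).re
  have hw₀ : f (σ * x₀ : ℝ) = w₀ := Complex.ext rfl (by simpa using hreal (σ * x₀))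
  have hw₀pos : 0 < |w₀| := by
    rw [hw₀, Complex.norm_real, Real.norm_eq_abs] at hfx₀
    exact (Real.exp_pos b).trans hfx₀
  set t₀ : ℝ := Real.log |w₀|
  have ht₀ : b < t₀ := by
    rw [hw₀, Complex.norm_real, Real.norm_eq_abs] at hfx₀
    exact (Real.lt_log_iff_exp_lt hw₀pos).mpr hfx₀
  obtain ⟨ε, hε, hεw⟩ : ∃ ε : ℝ, |ε| = 1 ∧ w₀ = ε * Real.exp t₀ := by
    refine ⟨w₀ / |w₀|, ?_, ?_⟩
    · rw [abs_div, abs_abs, div_self hw₀pos.ne']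
    · rw [Real.exp_log hw₀pos, div_mul_cancel₀ _ hw₀pos.ne']
  have hεn : ‖(ε : ℂ)‖ = 1 := by rw [Complex.norm_real, Real.norm_eq_abs, hε]
  have hε0 : (ε : ℂ) ≠ 0 := norm_pos_iff.mp (by rw [hεn]; exact one_pos)
  have hmem : ∀ t : ℝ, b < t → (t : ℂ) ∈ rightHalfPlane b := fun t ht => by
    simpa [rightHalfPlane] using ht
  have hvals : ∀ z ∈ rightHalfPlane b, ε * Complex.exp z ∈ {w : ℂ | Real.exp b < ‖w‖} := by
    intro z hz
    rw [mem_ofPred_eq, norm_mul, hεn, one_mul, Complex.norm_exp, Real.exp_lt_exp]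
    exact hz
  obtain ⟨φ, hφc, hφ₀, hφ⟩ := hcov.exists_lift (isOpen_rightHalfPlane b)
    (isSimplyConnected_rightHalfPlane b) (g := fun z => ε * Complex.exp z) (by fun_prop) hvals
    (hmem t₀ ht₀) (e₀ := ((σ * x₀ : ℝ) : ℂ)) (by rw [hw₀, hεw]; push_cast; rfl)
  have hφd := differentiableOn_of_comp_eq_exp hf.1 (isOpen_rightHalfPlane b) hε0 hφc hφ
  have hcmaps : MapsTo (starRingEnd ℂ) (rightHalfPlane b) (rightHalfPlane b) := fun z hz => by
    simpa [rightHalfPlane] using hz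
  have hφconj : ∀ z ∈ rightHalfPlane b, φ (starRingEnd ℂ z) = starRingEnd ℂ (φ z) := by
    have hval : ∀ z ∈ rightHalfPlane b,
        f (starRingEnd ℂ (φ (starRingEnd ℂ z))) = ε * Complex.exp z := fun z hz => by
      rw [apply_conj_of_real hf.1 hreal, hφ _ (hcmaps hz), map_mul, Complex.conj_ofReal,
        ← Complex.exp_conj, Complex.conj_conj]
    have heq : EqOn φ (fun z => starRingEnd ℂ (φ (starRingEnd ℂ z))) (rightHalfPlane b) := by
      refine hcov.eqOn_of_lift (isOpen_rightHalfPlane b) (isSimplyConnected_rightHalfPlane b)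
        hφc ?_ (fun z hz => by rw [hφ z hz]; exact hvals z hz)
        (fun z hz => by rw [hφ z hz, hval z hz]) (hmem t₀ ht₀) ?_
      · exact Complex.continuous_conj.comp_continuousOn
          (hφc.comp Complex.continuous_conj.continuousOn hcmaps)
      · rw [Complex.conj_ofReal, hφ₀, Complex.conj_ofReal]
    intro z hz
    rw [heq hz, Complex.conj_conj]
  set y : ℝ → ℝ := fun t => σ * (φ t).re with hy
  have hφreal : ∀ t, b < t → φ t = (σ * y t : ℝ) := by
    intro t ht
    have := hφconj _ (hmem t ht)
    rw [Complex.conj_ofReal] at this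
    rw [hy, ← mul_assoc, hσσ, one_mul]
    exact (Complex.conj_eq_iff_re.mp this.symm).symm
  have hfy : ∀ t ∈ Ioi b, ‖f (σ * y t : ℝ)‖ = Real.exp t := by
    intro t ht
    rw [← hφreal t ht, hφ _ (hmem t ht), norm_mul, hεn, one_mul, Complex.norm_exp,
      Complex.ofReal_re]
  have hyc : ContinuousOn y (Ioi b) :=
    (Complex.continuous_re.comp_continuousOn
      (hφc.comp Complex.continuous_ofReal.continuousOn hmem)).const_smul σ
  have hypos : ∀ t ∈ Ioi b, 0 < y t := by
    refine isPreconnected_Ioi.pos_of_ne_zero hyc (fun t ht hzero => ?_) ht₀ ?_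
    · have := hfy t ht
      rw [hzero, mul_zero, Complex.ofReal_zero] at this
      rw [this, Real.exp_le_exp] at h0
      exact absurd h0 (not_le.mpr ht)
    · simpa [hy, hφ₀, ← mul_assoc, hσσ] using hx₀
  have hslit : MapsTo (fun z => σ * φ z) (rightHalfPlane b) Complex.slitPlane := by
    intro z hz
    by_cases him : (φ z).im = 0
    · have hzim := im_eq_zero_of_im_lift_eq_zero hf hcov hεn hφc hφ hφconj hz him
      have hzre : z = (z.re : ℂ) := Complex.ext rfl (by simpa using hzim)
      have hpos := hypos z.re hz
      have hval : φ z = (σ * y z.re : ℝ) := by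
        conv_lhs => rw [hzre]
        exact hφreal _ hz
      change (σ : ℂ) * φ z ∈ Complex.slitPlane
      rw [hval, Complex.ofReal_mul, ← mul_assoc, hσσC, one_mul]
      exact Complex.ofReal_mem_slitPlane.mpr hpos
    · refine Complex.mem_slitPlane_iff.mpr (Or.inr ?_)
      rcases hσ with rfl | rfl <;> simpa using him
  refine ⟨y, hyc, hfy, hypos, y (b + 8) * Real.exp (-(b + 8) / 2),
    mul_pos (hypos _ (by simp)) (Real.exp_pos _), ?_⟩
  have hder : ∀ t, b < t → ∃ y', HasDerivAt y y' t ∧ y' ≤ 4 * y t / (t - b) := by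
    intro t ht
    have hball : ball (t : ℂ) (t - b) ⊆ rightHalfPlane b := by
      intro z hz
      rw [mem_ball, dist_comm, Complex.dist_eq] at hz
      have := (Complex.re_le_norm _).trans_lt hz
      simp at this
      exact this
    have hd : DifferentiableOn ℂ (fun z => σ * φ z) (rightHalfPlane b) := hφd.const_mul _
    have hval : σ * φ t = y t := by
      rw [hφreal t ht, Complex.ofReal_mul, ← mul_assoc, hσσC, one_mul]
    have hbound := norm_deriv_le_of_mapsTo_slitPlane (sub_pos.mpr ht) (hd.mono hball)
      (hslit.mono_left hball) (hypos t ht) hval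
    have hD := (hd.differentiableAt
      ((isOpen_rightHalfPlane b).mem_nhds (hmem t ht))).hasDerivAt.real_of_complex
    refine ⟨_, hD.congr_of_eventuallyEq ?_, (Complex.re_le_norm _).trans hbound⟩
    exact Eventually.of_forall fun s => by simp [hy]
  have hanti : AntitoneOn (fun t => y t * Real.exp (-t / 2)) (Ici (b + 8)) := by
    have hlt : ∀ t ∈ Ici (b + 8), b < t := fun t ht => by
      have : b + 8 ≤ t := ht
      linarith
    have hderiv : ∀ t ∈ Ici (b + 8), ∃ d, HasDerivAt (fun t => y t * Real.exp (-t / 2)) d t ∧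
        d ≤ 0 := by
      intro t ht
      obtain ⟨y', hD, hle⟩ := hder t (hlt t ht)
      have he : HasDerivAt (fun t : ℝ => Real.exp (-t / 2)) (Real.exp (-t / 2) * (-1 / 2)) t :=
        ((hasDerivAt_id t).neg.div_const 2).exp
      refine ⟨_, hD.mul he, ?_⟩
      have hy0 := hypos t (hlt t ht)
      have h8 : b + 8 ≤ t := ht
      have h2 : 4 * y t / (t - b) ≤ y t / 2 := by
        rw [div_le_div_iff₀ (by linarith) two_pos]
        nlinarith
      have : y' * Real.exp (-t / 2) + y t * (Real.exp (-t / 2) * (-1 / 2)) =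
        (y' - y t / 2) * Real.exp (-t / 2) := by ring
      rw [this]
      exact mul_nonpos_of_nonpos_of_nonneg (by linarith) (Real.exp_pos _).le
    refine antitoneOn_of_deriv_nonpos (convex_Ici _) (fun t ht => ?_) (fun t ht => ?_)
      (fun t ht => ?_)
    · obtain ⟨d, hd, -⟩ := hderiv t ht
      exact hd.continuousAt.continuousWithinAt
    · obtain ⟨d, hd, -⟩ := hderiv t (interior_subset ht)
      exact hd.differentiableAt.differentiableWithinAt
    · obtain ⟨d, hd, hle⟩ := hderiv t (interior_subset ht)
      rw [hd.deriv]
      exact hle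
  intro t ht
  have := hanti self_mem_Ici ht ht
  calc y t = y t * Real.exp (-t / 2) * Real.exp (t / 2) := by
        rw [mul_assoc, ← Real.exp_add]
        ring_nf
        simp
    _ ≤ _ := by gcongr

/-- On each half-line, a real transcendental entire function with bounded singular set is either
bounded, or tends to infinity faster than `2 * x`. -/
theorem bounded_or_two_mul_le {f : ℂ → ℂ} {b : ℝ} (hf : TranscendentalEntire f)
    (hreal : ∀ x : ℝ, (f x).im = 0) (hcov : IsCoveringMapOn f {w | Real.exp b < ‖w‖})
    (h0 : ‖f 0‖ ≤ Real.exp b) {σ : ℝ} (hσ : σ = 1 ∨ σ = -1) :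
    (∀ x : ℝ, 0 ≤ x → |(f (σ * x : ℝ)).re| ≤ Real.exp b) ∨
      ∃ τ : ℝ, (τ = 1 ∨ τ = -1) ∧ ∃ X > 0, ∀ x ≥ X, 2 * x ≤ τ * (f (σ * x : ℝ)).re := by
  have habs : ∀ x : ℝ, ‖f x‖ = |(f x).re| := fun x => by
    have : f x = ((f x).re : ℂ) := Complex.ext rfl (by simpa using hreal x)
    rw [this, Complex.norm_real, Real.norm_eq_abs, Complex.ofReal_re]
  refine or_iff_not_imp_left.mpr fun hnot => ?_
  push Not at hnot
  obtain ⟨x₀, hx₀, hfx₀⟩ := hnot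
  rw [← habs] at hfx₀
  have hx₀pos : 0 < x₀ := hx₀.lt_of_ne fun h => by
    rw [← h, mul_zero, Complex.ofReal_zero] at hfx₀
    linarith
  obtain ⟨y, hyc, hfy, hypos, C, hC, hyC⟩ :=
    exists_real_inverse_branch hf hreal hcov h0 hσ hx₀pos hfx₀
  have hunb : ∀ x, ∃ t ≥ b + 8, x ≤ y t := by
    intro x
    obtain ⟨B, hB⟩ := ((isCompact_closedBall (0 : ℂ) |x|).image
      hf.1.continuous).isBounded.exists_norm_le
    obtain ⟨t, ht1, ht2⟩ := ((eventually_ge_atTop (b + 8)).and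
      (Real.tendsto_exp_atTop.eventually_gt_atTop B)).exists
    refine ⟨t, ht1, ?_⟩
    have htb : t ∈ Ioi b := show b < t by linarith
    by_contra! hlt
    have hy0 := hypos t htb
    have hσa : |σ| = 1 := by rcases hσ with rfl | rfl <;> norm_num
    have := hB _ (mem_image_of_mem f (show ((σ * y t : ℝ) : ℂ) ∈ closedBall 0 |x| by
      rw [mem_closedBall_zero_iff, Complex.norm_real, Real.norm_eq_abs, abs_mul, hσa, one_mul,
        abs_of_pos hy0]
      exact hlt.le.trans (le_abs_self x)))
    rw [hfy t htb] at this
    linarith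
  set X := max (y (b + 8)) (2 * C ^ 2)
  have hX : 0 < X := lt_max_of_lt_right (by positivity)
  have hgrow : ∀ x ≥ X, 2 * x ≤ |(f (σ * x : ℝ)).re| := by
    intro x hx
    have hxpos : 0 < x := hX.trans_le hx
    have hxy : y (b + 8) ≤ x := (le_max_left _ _).trans hx
    have hxC : 2 * C ^ 2 ≤ x := (le_max_right _ _).trans hx
    obtain ⟨t₁, ht₁, hxt₁⟩ := hunb x
    obtain ⟨t, ht, rfl⟩ := intermediate_value_Icc ht₁ (hyc.mono fun s hs => show b < s by
      have := hs.1
      linarith) ⟨hxy, hxt₁⟩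
    rw [← habs, hfy t (show b < t by have := ht.1; linarith)]
    have h1 := hyC t ht.1
    have h2 : Real.exp (t / 2) * Real.exp (t / 2) = Real.exp t := by
      rw [← Real.exp_add, add_halves]
    have h3 : y t * y t ≤ C ^ 2 * Real.exp t := by
      rw [← h2]
      calc y t * y t ≤ (C * Real.exp (t / 2)) * (C * Real.exp (t / 2)) := by gcongr
        _ = _ := by ring
    have h4 : (2 * C ^ 2) * y t ≤ C ^ 2 * Real.exp t :=
      (mul_le_mul_of_nonneg_right hxC hxpos.le).trans h3
    nlinarith [pow_pos hC 2]
  have hFc : Continuous fun x : ℝ => (f (σ * x : ℝ)).re :=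
    Complex.continuous_re.comp (hf.1.continuous.comp (by fun_prop))
  have hne : ∀ x ∈ Ici X, (f (σ * x : ℝ)).re ≠ 0 := fun x hx hzero => by
    have := hgrow x hx
    rw [hzero, abs_zero] at this
    have : X ≤ x := hx
    linarith
  have hsign : ∃ τ : ℝ, (τ = 1 ∨ τ = -1) ∧ 0 < τ * (f (σ * X : ℝ)).re := by
    rcases lt_or_gt_of_ne (hne X self_mem_Ici) with h | h
    · exact ⟨-1, Or.inr rfl, by linarith⟩
    · exact ⟨1, Or.inl rfl, by linarith⟩
  obtain ⟨τ, hτ, hτX⟩ := hsign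
  have hτ0 : τ ≠ 0 := by rcases hτ with rfl | rfl <;> norm_num
  have hτa : |τ| = 1 := by rcases hτ with rfl | rfl <;> norm_num
  refine ⟨τ, hτ, X, hX, fun x hx => ?_⟩
  have hpos := isPreconnected_Ici.pos_of_ne_zero (hFc.const_mul τ).continuousOn
    (fun x hx => mul_ne_zero hτ0 (hne x hx)) self_mem_Ici hτX x hx
  rw [← abs_of_pos hpos, abs_mul, hτa, one_mul]
  exact hgrow x hx

theorem iterate_im_eq_zero {f : ℂ → ℂ} (hreal : ∀ x : ℝ, (f x).im = 0) {s : ℂ} (hs : s.im = 0)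
    (n : ℕ) : (f^[n] s).im = 0 := by
  induction n with
  | zero => exact hs
  | succ n ih =>
    rw [Function.iterate_succ_apply']
    have h := hreal (f^[n] s).re
    rwa [show ((f^[n] s).re : ℂ) = f^[n] s from Complex.ext rfl (by simpa using ih.symm)] at h

/-- If singular orbits accumulate at `σ * ∞`, then they accumulate at some `σ' * ∞` which `f` maps
to `σ * ∞`. -/
theorem MemSigma.exists_preimage {f : ℂ → ℂ} {S : Set ℂ} {b : ℝ} (hf : TranscendentalEntire f)
    (hreal : ∀ x : ℝ, (f x).im = 0) (hcov : IsCoveringMapOn f {w | Real.exp b < ‖w‖})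
    (h0 : ‖f 0‖ ≤ Real.exp b) {σ : ℝ} (hσ : σ = 1 ∨ σ = -1) (h : MemSigma f S σ) :
    ∃ σ' : ℝ, (σ' = 1 ∨ σ' = -1) ∧ MemSigma f S σ' ∧
      ∃ X > 0, ∀ x ≥ X, 2 * x ≤ σ * (f (σ' * x : ℝ)).re := by
  obtain ⟨s, hsS, hs, n, hn, hlim⟩ := h
  set y : ℕ → ℝ := fun j => (f^[n j - 1] s).re with hy
  have hyc : ∀ j, ((y j : ℝ) : ℂ) = f^[n j - 1] s := fun j =>
    Complex.ext rfl (by simpa using (iterate_im_eq_zero hreal hs _).symm)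
  have hlim' : Tendsto (fun j => σ * (f (y j)).re) atTop atTop := by
    refine hlim.congr' ?_
    filter_upwards [hn.eventually_ge_atTop 1] with j hj
    rw [hyc, ← Function.iterate_succ_apply' f, Nat.succ_eq_add_one, Nat.sub_add_cancel hj]
  have hyinf : Tendsto (fun j => |y j|) atTop atTop := by
    refine tendsto_atTop.mpr fun x => ?_
    obtain ⟨B, hB⟩ := ((isCompact_closedBall (0 : ℂ) x).image
      hf.1.continuous).isBounded.exists_norm_le
    filter_upwards [hlim'.eventually_gt_atTop B] with j hj
    by_contra! hlt
    have h1 := hB _ (mem_image_of_mem f (show ((y j : ℝ) : ℂ) ∈ closedBall 0 x by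
      rw [mem_closedBall_zero_iff, Complex.norm_real]
      exact hlt.le))
    have h2 : σ * (f (y j)).re ≤ |(f (y j)).re| := by
      rcases hσ with rfl | rfl
      · simpa using le_abs_self _
      · simpa using neg_le_abs _
    linarith [Complex.abs_re_le_norm (f (y j))]
  obtain ⟨σ', hσ', hfreq⟩ : ∃ σ' : ℝ, (σ' = 1 ∨ σ' = -1) ∧ ∃ᶠ j in atTop, 0 ≤ σ' * y j := by
    have : ∃ᶠ j in (atTop : Filter ℕ), 0 ≤ 1 * y j ∨ 0 ≤ -1 * y j :=
      (Eventually.of_forall fun j => by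
        rcases le_total 0 (y j) with h | h
        · exact Or.inl (by linarith)
        · exact Or.inr (by linarith)).frequently
    rcases frequently_or_distrib.mp this with h | h
    · exact ⟨1, Or.inl rfl, h⟩
    · exact ⟨-1, Or.inr rfl, h⟩
  have hσ'a : |σ'| = 1 := by rcases hσ' with rfl | rfl <;> norm_num
  have hσσ : σ' * σ' = 1 := by rcases hσ' with rfl | rfl <;> norm_num
  obtain ⟨k, hk, hpos⟩ := extraction_of_frequently_atTop hfreq
  have hyk : Tendsto (fun j => σ' * y (k j)) atTop atTop := by
    refine (hyinf.comp hk.tendsto_atTop).congr fun j => ?_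
    rw [← abs_of_nonneg (hpos j), abs_mul, hσ'a, one_mul, Function.comp_apply]
  have hfyk : Tendsto (fun j => σ * (f (y (k j))).re) atTop atTop := hlim'.comp hk.tendsto_atTop
  have hyσ : ∀ j, σ' * (σ' * y (k j)) = y (k j) := fun j => by rw [← mul_assoc, hσσ, one_mul]
  refine ⟨σ', hσ', ⟨s, hsS, hs, fun j => n (k j) - 1,
    (tendsto_sub_atTop_nat 1).comp (hn.comp hk.tendsto_atTop), hyk⟩, ?_⟩
  rcases bounded_or_two_mul_le hf hreal hcov h0 hσ' with hbd | ⟨τ, hτ, X, hX, hgrow⟩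
  · obtain ⟨j, hj⟩ := (hfyk.eventually_gt_atTop (Real.exp b)).exists
    have h1 := hbd _ (hpos j)
    rw [hyσ] at h1
    have h2 := abs_le.mp h1
    rcases hσ with rfl | rfl <;> linarith
  · obtain ⟨j, hj1, hj2⟩ := ((hfyk.eventually_gt_atTop 0).and
      (hyk.eventually_ge_atTop X)).exists
    have h1 := hgrow _ hj2
    rw [hyσ] at h1
    have hτσ : τ = σ := by
      rcases hσ with rfl | rfl <;> rcases hτ with rfl | rfl <;> first | rfl | linarith
    subst hτσ
    exact ⟨X, hX, hgrow⟩

/-- The real map `f` sends each `σ * ∞` with `σ ∈ Σ(f)` to some `τ * ∞` with `τ ∈ Σ(f)`. -/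
theorem MemSigma.exists_image {f : ℂ → ℂ} {S : Set ℂ} {b : ℝ} (hf : TranscendentalEntire f)
    (hreal : ∀ x : ℝ, (f x).im = 0) (hcov : IsCoveringMapOn f {w | Real.exp b < ‖w‖})
    (h0 : ‖f 0‖ ≤ Real.exp b) {σ : ℝ} (hσ : σ = 1 ∨ σ = -1) (h : MemSigma f S σ) :
    ∃ τ : ℝ, (τ = 1 ∨ τ = -1) ∧ MemSigma f S τ ∧
      ∃ X > 0, ∀ x ≥ X, 2 * x ≤ τ * (f (σ * x : ℝ)).re := by
  obtain ⟨σ', hσ', h', hG⟩ := h.exists_preimage hf hreal hcov h0 hσ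
  by_cases hσσ' : σ' = σ
  · subst hσσ'
    exact ⟨σ', hσ', h', hG⟩
  obtain ⟨σ'', hσ'', -, hG'⟩ := h'.exists_preimage hf hreal hcov h0 hσ'
  by_cases hσσ'' : σ'' = σ
  · subst hσσ''
    exact ⟨σ', hσ', h', hG'⟩
  exfalso
  have hneg : σ' = -σ := by
    rcases hσ with rfl | rfl <;> rcases hσ' with rfl | rfl <;> simp_all
  have hσ''' : σ'' = σ' := by
    rcases hσ with rfl | rfl <;> rcases hσ'' with rfl | rfl <;> simp_all
  subst hσ'''
  obtain ⟨X, hX, hG⟩ := hG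
  obtain ⟨Y, hY, hG'⟩ := hG'
  have h1 := hG _ (le_max_left X Y)
  have h2 := hG' _ (le_max_right X Y)
  rw [hneg] at h1 h2
  have : 0 < max X Y := lt_max_of_lt_left hX
  linarith

/-- **Theorem (Statement 10).** For `f ∈ B_ℝ` and all sufficiently large `M > 0`, the set
`A = ⋃_{σ ∈ Σ(f)} σ·[M,∞)` satisfies `A ⊆ I(f)` and `f(A) ⊆ A`. -/
theorem escaping_rays
    (f : ℂ → ℂ) (S : Set ℂ)
    (hf : TranscendentalEntire f)
    (hS : IsSingularValueSet f S)
    (hSbdd : Bornology.IsBounded S)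
    (hreal : f '' {z : ℂ | z.im = 0} ⊆ {z : ℂ | z.im = 0}) :
    ∃ M₀ : ℝ, 0 < M₀ ∧ ∀ M ≥ M₀, ∀ A : Set ℂ,
      A = {z : ℂ | z.im = 0 ∧ ∃ σ : ℝ, (σ = 1 ∨ σ = -1) ∧ MemSigma f S σ ∧ M ≤ σ * z.re} →
      A ⊆ EscapingSet f ∧ f '' A ⊆ A := by
  have hreal' : ∀ x : ℝ, (f x).im = 0 := fun x =>
    hreal (mem_image_of_mem f (show ((x : ℝ) : ℂ).im = 0 from Complex.ofReal_im x))
  obtain ⟨R, hR⟩ := hSbdd.exists_norm_le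
  set r : ℝ := max 1 (max R ‖f 0‖)
  have hr : 0 < r := lt_max_of_lt_left one_pos
  have hb : Real.exp (Real.log r) = r := Real.exp_log hr
  have hcov : IsCoveringMapOn f {w | Real.exp (Real.log r) < ‖w‖} := by
    refine hS.2.1.mono fun w hw hwS => ?_
    rw [mem_ofPred_eq, hb] at hw
    exact absurd ((hR w hwS).trans ((le_max_left _ _).trans (le_max_right _ _))) (not_le.mpr hw)
  have h0 : ‖f 0‖ ≤ Real.exp (Real.log r) := by
    rw [hb]
    exact (le_max_right _ _).trans (le_max_right _ _)
  have hX : ∀ σ : ℝ, (σ = 1 ∨ σ = -1) → ∃ X : ℝ, MemSigma f S σ →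
      ∃ τ : ℝ, (τ = 1 ∨ τ = -1) ∧ MemSigma f S τ ∧
        ∀ x ≥ X, 2 * x ≤ τ * (f (σ * x : ℝ)).re := by
    intro σ hσ
    by_cases h : MemSigma f S σ
    · obtain ⟨τ, hτ, hτS, X, -, hG⟩ := h.exists_image hf hreal' hcov h0 hσ
      exact ⟨X, fun _ => ⟨τ, hτ, hτS, hG⟩⟩
    · exact ⟨0, fun h' => absurd h' h⟩
  obtain ⟨X₁, hX₁⟩ := hX 1 (Or.inl rfl)
  obtain ⟨X₂, hX₂⟩ := hX (-1) (Or.inr rfl)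
  refine ⟨max 1 (max X₁ X₂), lt_max_of_lt_left one_pos, fun M hM A hA => ?_⟩
  have hM1 : 1 ≤ M := (le_max_left _ _).trans hM
  have hMX₁ : X₁ ≤ M := ((le_max_left _ _).trans (le_max_right _ _)).trans hM
  have hMX₂ : X₂ ≤ M := ((le_max_right _ _).trans (le_max_right _ _)).trans hM
  have habs : ∀ σ x : ℝ, (σ = 1 ∨ σ = -1) → σ * x ≤ |x| := by
    rintro σ x (rfl | rfl)
    · simpa using le_abs_self x
    · simpa using neg_le_abs x
  have hstep : ∀ z ∈ A, f z ∈ A ∧ 2 * |z.re| ≤ |(f z).re| := by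
    intro z hz
    rw [hA] at hz ⊢
    obtain ⟨him, σ, hσ, hσS, hMz⟩ := hz
    have hσσ : σ * (σ * z.re) = z.re := by rcases hσ with rfl | rfl <;> ring
    have hzabs : |z.re| = σ * z.re := by
      have : 0 ≤ σ * z.re := by linarith
      rw [← abs_of_nonneg this, abs_mul]
      rcases hσ with rfl | rfl <;> norm_num
    have hz' : ((z.re : ℝ) : ℂ) = z := Complex.ext rfl (by simpa using him.symm)
    obtain ⟨τ, hτ, hτS, hG⟩ : ∃ τ : ℝ, (τ = 1 ∨ τ = -1) ∧ MemSigma f S τ ∧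
        ∀ x ≥ M, 2 * x ≤ τ * (f (σ * x : ℝ)).re := by
      rcases hσ with rfl | rfl
      · obtain ⟨τ, hτ, hτS, hG⟩ := hX₁ hσS
        exact ⟨τ, hτ, hτS, fun x hx => hG x (hMX₁.trans hx)⟩
      · obtain ⟨τ, hτ, hτS, hG⟩ := hX₂ hσS
        exact ⟨τ, hτ, hτS, fun x hx => hG x (hMX₂.trans hx)⟩
    have hfz := hG _ hMz
    rw [hσσ, hz'] at hfz
    refine ⟨⟨hz' ▸ hreal' z.re, τ, hτ, hτS, by linarith⟩, ?_⟩
    rw [hzabs]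
    exact hfz.trans (habs _ _ hτ)
  refine ⟨fun z hz => ?_, by
    rintro _ ⟨z, hz, rfl⟩
    exact (hstep z hz).1⟩
  have hiter : ∀ n : ℕ, f^[n] z ∈ A ∧ (2 : ℝ) ^ n ≤ |(f^[n] z).re| := by
    intro n
    induction n with
    | zero =>
      refine ⟨hz, ?_⟩
      have hz' := hz
      rw [hA] at hz'
      obtain ⟨-, σ, hσ, -, hMz⟩ := hz'
      simpa using hM1.trans (hMz.trans (habs _ _ hσ))
    | succ n ih =>
      rw [Function.iterate_succ_apply']
      obtain ⟨h1, h2⟩ := hstep _ ih.1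
      refine ⟨h1, ?_⟩
      rw [pow_succ]
      linarith [ih.2]
  exact tendsto_atTop_mono (fun n => (hiter n).2.trans (Complex.abs_re_le_norm _))
    (tendsto_pow_atTop_atTop_of_one_lt one_lt_two)
end

section
/- Let f ∈ B_ℝ and σ ∈ Σ₀(f). Then the following are equivalent: (i) f satisfies the sector condition at σ∞; (ii) for every compact set K ⊂ ℂ there exist ϑ > 0 and R > 0 such that f⁻¹(K) ∩ S_{σ,ϑ,R} = ∅; (iii) there exists a point w in the unbounded connected component of ℂ∖S(f) and ϑ′ > 0, R′ > 0 such that f⁻¹(w) ∩ S_{σ,ϑ′,R′} = ∅. Here S_{σ,ϑ,R} := {σx + iy ∈ ℂ : x > R, y ∈ ℝ, |y| < ϑx} denotes a truncated sector. -/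
/-!
Formalization of: "Absence of wandering domains for functions in class B whose
singular values escape uniformly, under a thickness condition along an invariant set A."
-/

open Set Metric Filter Topology

/-- `f` satisfies the (real) sector condition at `σ∞`: for all sufficiently large `R > 0`
there are `ϑ > 0` and `R' > 0` with `|f(σx + y)| > R` whenever `x > R'` and `|y| < ϑx`. -/
def SectorCondAt (f : ℂ → ℂ) (σ : ℝ) : Prop :=
  ∃ R₀ > (0 : ℝ), ∀ R ≥ R₀, ∃ ϑ > (0 : ℝ), ∃ R' > (0 : ℝ), ∀ x : ℝ, R' < x →
    ∀ y : ℂ, ‖y‖ < ϑ * x → R < ‖f ((σ * x : ℝ) + y)‖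

/-- The truncated sector `S_{σ,ϑ,R} = {σx + iy : x > R, |y| < ϑx}`. -/
def TruncSector (σ ϑ R : ℝ) : Set ℂ :=
  {z : ℂ | R < σ * z.re ∧ |z.im| < ϑ * (σ * z.re)}

/-- A continuous right inverse of an entire function on an open set is holomorphic. -/
lemma differentiableOn_of_continuousOn_of_rightInvOn {f g : ℂ → ℂ} {U : Set ℂ}
    (hf : Differentiable ℂ f) (hU : IsOpen U) (hg : ContinuousOn g U)
    (hfg : ∀ v ∈ U, f (g v) = v) : DifferentiableOn ℂ g U := by
  intro c hc
  have hgc : ContinuousAt g c := hg.continuousAt (hU.mem_nhds hc)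
  have hdf : AnalyticOnNhd ℂ (deriv f) univ :=
    hf.differentiableOn.deriv isOpen_univ |>.analyticOnNhd isOpen_univ
  refine (Complex.analyticAt_of_differentiable_on_punctured_nhds_of_continuousAt ?_
    hgc).differentiableAt.differentiableWithinAt
  rcases (hdf (g c) trivial).eventually_eq_zero_or_eventually_ne_zero with h | h
  · exfalso
    have hzero : ∀ z, deriv f z = 0 := fun z =>
      hdf.eqOn_zero_of_preconnected_of_eventuallyEq_zero isPreconnected_univ
        (mem_univ (g c)) h (mem_univ z)
    have hconst := is_const_of_deriv_eq_zero hf hzero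
    have hsub : U ⊆ {c} := fun v hv => by
      rw [mem_singleton_iff, ← hfg v hv, ← hfg c hc]
      exact hconst _ _
    have hnhds : ({c} : Set ℂ) ∈ 𝓝 c := mem_of_superset (hU.mem_nhds hc) hsub
    exact not_isOpen_singleton c (isOpen_singleton_iff_nhds_eq_pure c |>.2
      (le_antisymm (le_pure_iff.2 hnhds) (pure_le_nhds c)))
  · have hpunct : Tendsto g (𝓝[≠] c) (𝓝[≠] (g c)) := by
      refine tendsto_nhdsWithin_iff.2 ⟨hgc.tendsto.mono_left nhdsWithin_le_nhds, ?_⟩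
      filter_upwards [self_mem_nhdsWithin, nhdsWithin_le_nhds (hU.mem_nhds hc)] with v hv hvU hgv
      exact hv (by rw [mem_singleton_iff, ← hfg v hvU, ← hfg c hc, hgv])
    filter_upwards [hpunct.eventually h, nhdsWithin_le_nhds (hU.mem_nhds hc)] with v hv hvU
    exact (HasDerivAt.of_local_left_inverse (hg.continuousAt (hU.mem_nhds hvU))
      (hf (g v)).hasDerivAt hv (by
        filter_upwards [hU.mem_nhds hvU] with y hy using hfg y hy)).differentiableAt

/-- Over a small neighbourhood of an evenly covered point, every point of the preimage
is in the range of a continuous section. -/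
lemma IsEvenlyCovered.exists_section {f : ℂ → ℂ} {v₀ : ℂ} {I : Type*} [TopologicalSpace I]
    (h : IsEvenlyCovered f v₀ I) :
    ∃ U : Set ℂ, IsOpen U ∧ v₀ ∈ U ∧ ∀ z, f z ∈ U →
      ∃ g : ℂ → ℂ, ContinuousOn g U ∧ (∀ v ∈ U, f (g v) = v) ∧ g (f z) = z := by
  classical
  obtain ⟨-, U, hv₀, hU, -, H, hH⟩ := h
  refine ⟨U, hU, hv₀, fun z hz => ?_⟩
  let s : U → ℂ := fun u => H.symm (u, (H ⟨z, hz⟩).2)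
  have hs : Continuous s := by fun_prop
  refine ⟨fun v => if hv : v ∈ U then s ⟨v, hv⟩ else 0, ?_, ?_, ?_⟩
  · rw [continuousOn_iff_continuous_domRestrict]
    convert hs using 1
    ext u
    simp
  · intro v hv
    have := hH (H.symm (⟨v, hv⟩, (H ⟨z, hz⟩).2))
    simp only [Homeomorph.apply_symm_apply] at this
    simp [hv, s, ← this]
  · have : (⟨f z, hz⟩ : U) = (H ⟨z, hz⟩).1 := Subtype.ext (hH ⟨z, hz⟩).symm
    have hz' : f z ∈ U := hz
    simp only [hz', dif_pos, s]
    rw [this]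
    simp

/-- Schwarz-type estimate for holomorphic maps from a disc to the right half-plane. -/
lemma norm_sub_le_of_re_pos {q : ℂ → ℂ} {c z : ℂ} {r : ℝ}
    (hq : DifferentiableOn ℂ q (ball c r)) (hpos : ∀ v ∈ ball c r, 0 < (q v).re)
    (hz : z ∈ ball c r) :
    ‖q z - q c‖ ≤ 2 * (q c).re * ‖z - c‖ / (r - ‖z - c‖) := by
  have hr : 0 < r := nonempty_ball.1 ⟨z, hz⟩
  have hmaps : MapsTo (fun u => c + u) (ball 0 r) (ball c r) := fun u hu => by
    simpa using hu
  have := Complex.borelCaratheodory_zero (f := fun u => q c - q (c + u)) (z := z - c)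
    (hpos c (mem_ball_self hr)) ((hq.comp (by fun_prop) hmaps).const_sub _)
    (fun u hu => by
      have := hpos _ (hmaps hu)
      simp only [mem_ofPred_eq, Complex.sub_re]
      linarith) hr (by simpa [dist_eq_norm] using hz) (by simp)
  simpa [norm_sub_rev] using this

/-- A holomorphic map from a disc to the slit plane whose value at the centre is close to
the slit, is almost constant on a smaller disc. -/
lemma norm_sub_le_of_mapsTo_slitPlane {h : ℂ → ℂ} {c z : ℂ} {r t : ℝ}
    (hh : DifferentiableOn ℂ h (ball c r)) (hmaps : ∀ v ∈ ball c r, h v ∈ Complex.slitPlane)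
    (hr : 0 < r) (hz : ‖z - c‖ ≤ 2 / 3 * r) (ht : 0 < t) (hc : (h c).re = -t) :
    ‖h z - h c‖ ≤ 6 * (h c).im ^ 2 / t + 12 * |(h c).im| := by
  set q : ℂ → ℂ := fun v => Complex.exp (Complex.log (h v) / 2) with hq
  have hsq : ∀ v ∈ ball c r, q v ^ 2 = h v := fun v hv => by
    rw [hq, ← Complex.exp_nat_mul]
    push_cast
    rw [mul_div_cancel₀ _ two_ne_zero, Complex.exp_log (Complex.slitPlane_ne_zero (hmaps v hv))]
  have hqd : DifferentiableOn ℂ q (ball c r) := ((hh.clog hmaps).div_const 2).cexp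
  have hpos : ∀ v ∈ ball c r, 0 < (q v).re := fun v hv => by
    rw [hq, Complex.exp_re]
    have h1 := (Complex.mem_slitPlane_iff_arg.1 (hmaps v hv)).1
    have h2 := Complex.neg_pi_lt_arg (h v)
    have h3 := lt_of_le_of_ne (Complex.arg_le_pi (h v)) h1
    have him : (Complex.log (h v) / 2).im = (h v).arg / 2 := by
      rw [← Complex.log_im]
      simp
    rw [him]
    exact mul_pos (Real.exp_pos _) (Real.cos_pos_of_mem_Ioo ⟨by linarith, by linarith⟩)
  have hcb : c ∈ ball c r := mem_ball_self hr
  have hzb : z ∈ ball c r := by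
    rw [mem_ball, dist_eq_norm]
    linarith
  set a := (q c).re with ha
  set b := (q c).im with hb
  have ha0 : 0 < a := hpos c hcb
  have hre : a ^ 2 - b ^ 2 = -t := by
    rw [← hc, ← hsq c hcb, pow_two (q c), Complex.mul_re]
    ring
  have him : (h c).im = 2 * a * b := by
    rw [← hsq c hcb, pow_two (q c), Complex.mul_im]
    ring
  have hdiff : ‖q z - q c‖ ≤ 4 * a := by
    refine (norm_sub_le_of_re_pos hqd hpos hzb).trans ?_
    rw [div_le_iff₀ (by linarith)]
    nlinarith [norm_nonneg (z - c)]
  have hqc : ‖q c‖ ≤ a + |b| := by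
    simpa only [← ha, ← hb, abs_of_pos ha0] using Complex.norm_le_abs_re_add_abs_im (q c)
  have hfac : h z - h c = (q z - q c) * ((q z - q c) + 2 * q c) := by
    rw [← hsq z hzb, ← hsq c hcb]
    ring
  have hnorm : ‖h z - h c‖ ≤ 4 * a * (4 * a + 2 * (a + |b|)) := by
    rw [hfac, norm_mul]
    have : ‖(q z - q c) + 2 * q c‖ ≤ 4 * a + 2 * (a + |b|) :=
      (norm_add_le _ _).trans (by rw [norm_mul, Complex.norm_ofNat]; linarith)
    gcongr
  have hta : a ^ 2 ≤ (h c).im ^ 2 / (4 * t) := by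
    rw [le_div_iff₀ (by positivity), him]
    nlinarith [mul_nonneg (sq_nonneg a) (sq_nonneg a)]
  have hfrac : 6 * (h c).im ^ 2 / t = 24 * ((h c).im ^ 2 / (4 * t)) := by
    field_simp
    ring
  have habs : |(h c).im| = 2 * a * |b| := by
    rw [him, abs_mul, abs_of_pos (by positivity : 0 < 2 * a)]
  rw [hfrac, habs]
  nlinarith [mul_nonneg ha0.le (abs_nonneg b)]

/-- The preimage of `K` under `f` avoids some truncated sector around the ray towards `σ∞`. -/
def PreimageOmitsSector (f : ℂ → ℂ) (σ : ℝ) (K : Set ℂ) : Prop :=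
  ∃ ϑ > (0 : ℝ), ∃ R > (0 : ℝ), f ⁻¹' K ∩ TruncSector σ ϑ R = ∅

lemma truncSector_subset {σ ϑ ϑ' R R' : ℝ} (hϑ : ϑ ≤ ϑ') (hR' : 0 ≤ R') (hR : R' ≤ R) :
    TruncSector σ ϑ R ⊆ TruncSector σ ϑ' R' := fun z hz => by
  have h1 : R < σ * z.re := hz.1
  exact ⟨hR.trans_lt h1, hz.2.trans_le (mul_le_mul_of_nonneg_right hϑ (by linarith))⟩

lemma PreimageOmitsSector.mono {f : ℂ → ℂ} {σ : ℝ} {K L : Set ℂ}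
    (h : PreimageOmitsSector f σ L) (hKL : K ⊆ L) : PreimageOmitsSector f σ K := by
  obtain ⟨ϑ, hϑ, R, hR, h⟩ := h
  exact ⟨ϑ, hϑ, R, hR, subset_eq_empty (inter_subset_inter_left _ (preimage_mono hKL)) h⟩

lemma PreimageOmitsSector.union {f : ℂ → ℂ} {σ : ℝ} {K L : Set ℂ}
    (hK : PreimageOmitsSector f σ K) (hL : PreimageOmitsSector f σ L) :
    PreimageOmitsSector f σ (K ∪ L) := by
  obtain ⟨ϑ₁, hϑ₁, R₁, hR₁, h₁⟩ := hK
  obtain ⟨ϑ₂, hϑ₂, R₂, hR₂, h₂⟩ := hL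
  refine ⟨min ϑ₁ ϑ₂, lt_min hϑ₁ hϑ₂, max R₁ R₂, lt_max_of_lt_left hR₁, ?_⟩
  rw [preimage_union, union_inter_distrib_right, union_empty_iff]
  exact ⟨subset_eq_empty (inter_subset_inter_right _
      (truncSector_subset (min_le_left _ _) hR₁.le (le_max_left _ _))) h₁,
    subset_eq_empty (inter_subset_inter_right _
      (truncSector_subset (min_le_right _ _) hR₂.le (le_max_right _ _))) h₂⟩

/-- Near an evenly covered value, omitting one value in a sector forces omitting a whole
neighbourhood of values in a smaller sector. -/
lemma exists_nhds_preimageOmitsSector {f : ℂ → ℂ} (hf : Differentiable ℂ f) {σ : ℝ}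
    (hσ : σ = 1 ∨ σ = -1)
    (hσ₀ : Tendsto (fun x : ℝ => ‖f ((σ * x : ℝ) : ℂ)‖) atTop atTop)
    {v₀ : ℂ} {I : Type*} [TopologicalSpace I] (h : IsEvenlyCovered f v₀ I) :
    ∃ B : Set ℂ, IsOpen B ∧ v₀ ∈ B ∧
      ∀ v ∈ B, PreimageOmitsSector f σ {v} → PreimageOmitsSector f σ B := by
  obtain ⟨U, hU, hv₀, hsec⟩ := h.exists_section
  obtain ⟨r, hr, hrU⟩ := Metric.isOpen_iff.1 hU v₀ hv₀
  have hσσ : σ * σ = 1 := by rcases hσ with rfl | rfl <;> norm_num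
  have hσa : |σ| = 1 := by rcases hσ with rfl | rfl <;> norm_num
  obtain ⟨x₁, hx₁⟩ := eventually_atTop.1 (hσ₀.eventually_ge_atTop (‖v₀‖ + r))
  set x₀ := max x₁ 1 with hx₀
  have hx₀pos : 0 < x₀ := lt_max_of_lt_right one_pos
  refine ⟨ball v₀ (r / 4), isOpen_ball, mem_ball_self (by positivity), ?_⟩
  rintro v hv ⟨ϑ, hϑ, R, hR, hom⟩
  set δ := min (1 / 50) (ϑ / 60) with hδ
  have hδpos : 0 < δ := by positivity
  refine ⟨δ, hδpos, 2 * max x₀ R, by positivity, ?_⟩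
  rw [eq_empty_iff_forall_notMem]
  rintro z ⟨hzB, hzR, hzδ⟩
  have hzB' : dist (f z) v₀ < r / 4 := hzB
  have hv' : dist v v₀ < r / 4 := hv
  have hball : ball (f z) (3 / 4 * r) ⊆ ball v₀ r := fun u hu => by
    have hu' : dist u (f z) < 3 / 4 * r := hu
    rw [mem_ball]
    linarith [dist_triangle u (f z) v₀]
  obtain ⟨g, hgc, hfg, hgz⟩ := hsec z (hrU (hball (mem_ball_self (by positivity))))
  have hgd := differentiableOn_of_continuousOn_of_rightInvOn hf hU hgc hfg
  set A := σ * z.re with hA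
  have hx₀A : 2 * x₀ < A := lt_of_le_of_lt (by gcongr; exact le_max_left _ _) hzR
  have hRA : 2 * R < A := lt_of_le_of_lt (by gcongr; exact le_max_right _ _) hzR
  have hslit : ∀ u ∈ ball (f z) (3 / 4 * r), (x₀ : ℂ) - σ * g u ∈ Complex.slitPlane := by
    intro u hu
    rw [Complex.mem_slitPlane_iff]
    by_contra! hcon
    simp only [Complex.sub_re, Complex.ofReal_re, Complex.re_ofReal_mul, Complex.sub_im,
      Complex.ofReal_im, Complex.im_ofReal_mul, zero_sub, neg_eq_zero] at hcon
    have him : (g u).im = 0 := by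
      have : σ * (σ * (g u).im) = 0 := by rw [hcon.2, mul_zero]
      rwa [← mul_assoc, hσσ, one_mul] at this
    have hgu : g u = ((σ * (σ * (g u).re) : ℝ) : ℂ) := by
      rw [← mul_assoc, hσσ, one_mul]
      exact Complex.ext (by simp) (by simpa using him)
    have hbig := hx₁ (σ * (g u).re) (by linarith [le_max_left x₁ 1])
    rw [← hgu, hfg u (hrU (hball hu))] at hbig
    have hu' : dist u v₀ < r := hball hu
    rw [dist_eq_norm] at hu'
    linarith [norm_le_norm_add_norm_sub' u v₀]
  have hkey := norm_sub_le_of_mapsTo_slitPlane (h := fun u => (x₀ : ℂ) - σ * g u) (z := v)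
    (t := A - x₀)
    (((hgd.mono (hball.trans hrU)).const_mul _).const_sub _) hslit (by positivity)
    (by
      rw [← dist_eq_norm]
      linarith [dist_triangle v v₀ (f z), dist_comm v₀ (f z)])
    (by linarith) (by simp [hgz, hA])
  have hnorm : ‖((x₀ : ℂ) - σ * g v) - (x₀ - σ * g (f z))‖ = ‖g v - z‖ := by
    rw [hgz, show ((x₀ : ℂ) - σ * g v) - (x₀ - σ * z) = σ * (z - g v) by ring, norm_mul,
      Complex.norm_real, Real.norm_eq_abs, hσa, one_mul, norm_sub_rev]
  have him : |((x₀ : ℂ) - σ * g (f z)).im| = |z.im| := by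
    simp [hgz, abs_mul, hσa]
  rw [hnorm, ← sq_abs, him] at hkey
  have hδ1 : δ ≤ 1 / 50 := min_le_left _ _
  have hδ2 : δ ≤ ϑ / 60 := min_le_right _ _
  have hApos : 0 < A := by linarith
  have hfrac : 6 * |z.im| ^ 2 / (A - x₀) ≤ 12 * (δ * A) := by
    rw [div_le_iff₀ (by linarith)]
    have h1 : |z.im| ^ 2 ≤ (δ * A) ^ 2 := by gcongr
    have h2 : (δ * A) ^ 2 ≤ (δ * A) * A := by
      rw [pow_two]
      gcongr
      nlinarith
    nlinarith [mul_pos hδpos hApos]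
  have hclose : ‖g v - z‖ ≤ 24 * (δ * A) := by linarith
  have hre : |σ * (g v).re - A| ≤ 24 * (δ * A) := by
    rw [hA, ← mul_sub, abs_mul, hσa, one_mul, ← Complex.sub_re]
    exact (Complex.abs_re_le_norm _).trans hclose
  have hgim : |(g v).im| ≤ 25 * (δ * A) := by
    have h1 := (Complex.abs_im_le_norm (g v - z)).trans hclose
    rw [Complex.sub_im] at h1
    have h2 := abs_sub_abs_le_abs_sub (g v).im z.im
    linarith
  have hre' := abs_le.1 hre
  have hδA : δ * A ≤ 1 / 50 * A := by gcongr
  have hhalf : A / 2 < σ * (g v).re := by linarith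
  refine eq_empty_iff_forall_notMem.1 hom (g v) ⟨?_, by linarith, ?_⟩
  · exact hfg v (hrU (ball_subset_ball (by linarith) hv))
  · calc |(g v).im| ≤ 25 * (δ * A) := hgim
      _ ≤ 25 * (ϑ / 60 * A) := by gcongr
      _ < ϑ * (A / 2) := by nlinarith [mul_pos hϑ hApos]
      _ ≤ ϑ * (σ * (g v).re) := by gcongr

/-- The complement of a disc in the plane is connected. -/
lemma isPreconnected_setOf_lt_norm_s15 {M : ℝ} (hM : 0 < M) : IsPreconnected {z : ℂ | M < ‖z‖} := by
  have : {z : ℂ | M < ‖z‖} = Complex.exp '' {z : ℂ | Real.log M < z.re} := by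
    ext z
    simp only [mem_ofPred_eq, mem_image]
    constructor
    · intro hz
      have hz0 : z ≠ 0 := by
        rintro rfl
        rw [norm_zero] at hz
        linarith
      exact ⟨Complex.log z, by rw [Complex.log_re]; exact Real.log_lt_log hM hz,
        Complex.exp_log hz0⟩
    · rintro ⟨u, hu, rfl⟩
      rwa [Complex.norm_exp, ← Real.log_lt_iff_lt_exp hM]
  rw [this]
  exact (convex_halfSpace_re_gt _).isPreconnected.image _ Complex.continuous_exp.continuousOn

/-- The property of being omitted in a sector propagates along connected sets of evenly
covered values. -/
lemma PreimageOmitsSector.of_isPreconnected {f : ℂ → ℂ} {S C : Set ℂ} {σ : ℝ} {w v : ℂ}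
    (hnhds : ∀ u ∈ Sᶜ, ∃ B : Set ℂ, IsOpen B ∧ u ∈ B ∧
      ∀ v ∈ B, PreimageOmitsSector f σ {v} → PreimageOmitsSector f σ B)
    (hC : IsPreconnected C) (hCS : C ⊆ Sᶜ) (hw : w ∈ C) (hv : v ∈ C)
    (h : PreimageOmitsSector f σ {w}) : PreimageOmitsSector f σ {v} := by
  choose! B hBo hBm hB using hnhds
  have hsub : C ⊆ ⋃ u ∈ {u ∈ C | PreimageOmitsSector f σ {u}}, B u := by
    refine hC.subset_left_of_subset_union
      (v := ⋃ u ∈ {u ∈ C | ¬ PreimageOmitsSector f σ {u}}, B u)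
      (isOpen_biUnion fun u hu => hBo u (hCS hu.1))
      (isOpen_biUnion fun u hu => hBo u (hCS hu.1)) ?_ ?_ ?_
    · rw [disjoint_left]
      intro x hx hx'
      simp only [mem_iUnion] at hx hx'
      obtain ⟨u, hu, hxu⟩ := hx
      obtain ⟨u', hu', hxu'⟩ := hx'
      have h1 := hB u (hCS hu.1) u (hBm u (hCS hu.1)) hu.2
      have h2 := hB u' (hCS hu'.1) x hxu' (h1.mono (singleton_subset_iff.2 hxu))
      exact hu'.2 (h2.mono (singleton_subset_iff.2 (hBm u' (hCS hu'.1))))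
    · intro u hu
      by_cases hP : PreimageOmitsSector f σ {u}
      · exact Or.inl (mem_biUnion (show u ∈ {u ∈ C | _} from ⟨hu, hP⟩) (hBm u (hCS hu)))
      · exact Or.inr (mem_biUnion (show u ∈ {u ∈ C | _} from ⟨hu, hP⟩) (hBm u (hCS hu)))
    · exact ⟨w, hw, mem_biUnion (show w ∈ {u ∈ C | _} from ⟨hw, h⟩) (hBm w (hCS hw))⟩
  have hvB := hsub hv
  simp only [mem_iUnion] at hvB
  obtain ⟨u, hu, hvu⟩ := hvB
  exact (hB u (hCS hu.1) u (hBm u (hCS hu.1)) hu.2).mono (singleton_subset_iff.2 hvu)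

/-- If the preimage of a circle omits a sector, then so does that of the closed disc it bounds. -/
lemma PreimageOmitsSector.closedBall_of_sphere {f : ℂ → ℂ} (hf : Continuous f) {σ : ℝ}
    (hσ : σ = 1 ∨ σ = -1)
    (hσ₀ : Tendsto (fun x : ℝ => ‖f ((σ * x : ℝ) : ℂ)‖) atTop atTop) {M : ℝ}
    (h : PreimageOmitsSector f σ (sphere 0 M)) : PreimageOmitsSector f σ (closedBall 0 M) := by
  have hσσ : σ * σ = 1 := by rcases hσ with rfl | rfl <;> norm_num
  obtain ⟨ϑ, hϑ, R, hR, hom⟩ := h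
  obtain ⟨x₁, hx₁⟩ := eventually_atTop.1 (hσ₀.eventually_ge_atTop M)
  refine ⟨ϑ, hϑ, max R x₁, lt_max_of_lt_left hR, ?_⟩
  rw [eq_empty_iff_forall_notMem]
  rintro z ⟨hzM, hzR, hzϑ⟩
  have hzM' : ‖f z‖ ≤ M := by simpa using hzM
  have hzR' := (max_lt_iff.1 hzR)
  let p : ℝ → ℂ := fun s => ⟨z.re, s * z.im⟩
  have hp : Continuous p := by
    have : p = fun s : ℝ => (z.re : ℂ) + (s : ℂ) * (z.im : ℂ) * Complex.I := by
      ext s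
      apply Complex.ext <;> simp [p]
    rw [this]
    fun_prop
  have h0 : M ≤ ‖f (p 0)‖ := by
    have := hx₁ _ hzR'.2.le
    rw [← mul_assoc, hσσ, one_mul] at this
    have hp0 : p 0 = (z.re : ℂ) := by apply Complex.ext <;> simp [p]
    rwa [hp0]
  have h1 : ‖f (p 1)‖ ≤ M := by
    have hp1 : p 1 = z := by apply Complex.ext <;> simp [p]
    rwa [hp1]
  obtain ⟨s, hs, hfs⟩ := intermediate_value_Icc' zero_le_one
    ((hf.comp hp).norm.continuousOn (s := Icc (0 : ℝ) 1)) ⟨h1, h0⟩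
  refine eq_empty_iff_forall_notMem.1 hom (p s) ⟨by simpa using hfs, hzR'.1, ?_⟩
  refine lt_of_le_of_lt ?_ hzϑ
  simp only [p, abs_mul, abs_of_nonneg hs.1]
  exact mul_le_of_le_one_left (abs_nonneg _) hs.2

lemma sectorCondAt_iff_forall_isCompact {f : ℂ → ℂ} {σ : ℝ} (hσ : σ = 1 ∨ σ = -1) :
    SectorCondAt f σ ↔ ∀ K : Set ℂ, IsCompact K → PreimageOmitsSector f σ K := by
  have hσσ : σ * σ = 1 := by rcases hσ with rfl | rfl <;> norm_num
  have hσa : |σ| = 1 := by rcases hσ with rfl | rfl <;> norm_num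
  constructor
  · rintro ⟨R₀, -, h⟩ K hK
    obtain ⟨M, hM⟩ := hK.isBounded.exists_norm_le
    obtain ⟨ϑ, hϑ, R', hR', h⟩ := h (max R₀ M) (le_max_left _ _)
    refine ⟨ϑ, hϑ, R', hR', ?_⟩
    rw [eq_empty_iff_forall_notMem]
    rintro z ⟨hzK, hzR, hzϑ⟩
    have hlt := h (σ * z.re) hzR (z.im * Complex.I) (by simpa using hzϑ)
    rw [← mul_assoc, hσσ, one_mul, Complex.re_add_im] at hlt
    linarith [hM _ hzK, le_max_right R₀ M]
  · intro h
    refine ⟨1, one_pos, fun R _ => ?_⟩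
    obtain ⟨ϑ, hϑ, R', hR', hom⟩ := h (closedBall 0 R) (isCompact_closedBall 0 R)
    refine ⟨min (1 / 2) (ϑ / 2), by positivity, 2 * R', by positivity, fun x hx y hy => ?_⟩
    by_contra! hle
    have hxpos : 0 < x := by linarith
    have hy1 : ‖y‖ < 1 / 2 * x := hy.trans_le (by gcongr; exact min_le_left _ _)
    have hy2 : ‖y‖ < ϑ / 2 * x := hy.trans_le (by gcongr; exact min_le_right _ _)
    have hre : σ * (((σ * x : ℝ) : ℂ) + y).re = x + σ * y.re := by
      rw [Complex.add_re, Complex.ofReal_re, mul_add, ← mul_assoc, hσσ, one_mul]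
    have hyre : |σ * y.re| ≤ ‖y‖ := by
      rw [abs_mul, hσa, one_mul]
      exact Complex.abs_re_le_norm y
    have hhalf : x / 2 < σ * (((σ * x : ℝ) : ℂ) + y).re := by
      rw [hre]
      linarith [(abs_le.1 hyre).1]
    refine eq_empty_iff_forall_notMem.1 hom (((σ * x : ℝ) : ℂ) + y)
      ⟨by simpa using hle, by linarith, ?_⟩
    calc |(((σ * x : ℝ) : ℂ) + y).im| = |y.im| := by
          rw [Complex.add_im, Complex.ofReal_im, zero_add]
      _ ≤ ‖y‖ := Complex.abs_im_le_norm y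
      _ < ϑ / 2 * x := hy2
      _ = ϑ * (x / 2) := by ring
      _ ≤ _ := by gcongr

/-- **Theorem (Statement 15).** For `f ∈ B_ℝ` and `σ ∈ Σ₀(f)`, the following are equivalent:
(i) the sector condition at `σ∞`; (ii) every compact set has preimage omitting a truncated
sector; (iii) some point of the unbounded component of `ℂ ∖ S(f)` has preimage omitting a
truncated sector. -/
theorem sector_condition_tfae
    (f : ℂ → ℂ) (S : Set ℂ)
    (hf : TranscendentalEntire f)
    (hS : IsSingularValueSet f S)
    (hSbdd : Bornology.IsBounded S)
    (hreal : f '' {z : ℂ | z.im = 0} ⊆ {z : ℂ | z.im = 0})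
    (σ : ℝ) (hσ : σ = 1 ∨ σ = -1)
    (hσ₀ : Tendsto (fun x : ℝ => ‖f ((σ * x : ℝ) : ℂ)‖) atTop atTop) :
    (SectorCondAt f σ ↔
      ∀ K : Set ℂ, IsCompact K → ∃ ϑ > (0 : ℝ), ∃ R > (0 : ℝ),
        f ⁻¹' K ∩ TruncSector σ ϑ R = ∅) ∧
    (SectorCondAt f σ ↔
      ∃ w : ℂ, w ∉ S ∧ ¬Bornology.IsBounded (connectedComponentIn Sᶜ w) ∧
        ∃ ϑ' > (0 : ℝ), ∃ R' > (0 : ℝ), f ⁻¹' {w} ∩ TruncSector σ ϑ' R' = ∅) := by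
  rw [sectorCondAt_iff_forall_isCompact hσ]
  refine ⟨Iff.rfl, ?_⟩
  obtain ⟨M, hM, hSM⟩ := hSbdd.exists_pos_norm_le
  have hext : {z : ℂ | M < ‖z‖} ⊆ Sᶜ := fun z hz hzS => (hSM z hzS).not_gt hz
  constructor
  · intro h
    have hMw : ((M + 1 : ℝ) : ℂ) ∈ {z : ℂ | M < ‖z‖} := by
      rw [mem_ofPred_eq, Complex.norm_real, Real.norm_eq_abs]
      exact (lt_add_one M).trans_le (le_abs_self _)
    refine ⟨((M + 1 : ℝ) : ℂ), hext hMw, fun hbdd => ?_, h _ isCompact_singleton⟩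
    obtain ⟨N, hN⟩ := (hbdd.subset ((isPreconnected_setOf_lt_norm_s15 hM).subset_connectedComponentIn
      hMw hext)).exists_norm_le
    have hbig : M < ‖((max M N + 1 : ℝ) : ℂ)‖ ∧ N < ‖((max M N + 1 : ℝ) : ℂ)‖ := by
      rw [Complex.norm_real, Real.norm_eq_abs]
      have := le_abs_self (max M N + 1)
      constructor <;> linarith [le_max_left M N, le_max_right M N]
    exact (hN _ hbig.1).not_gt hbig.2
  · rintro ⟨w, hwS, hunb, hw⟩ K hK
    have hnhds : ∀ u ∈ Sᶜ, ∃ B : Set ℂ, IsOpen B ∧ u ∈ B ∧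
        ∀ v ∈ B, PreimageOmitsSector f σ {v} → PreimageOmitsSector f σ B := fun u hu =>
      exists_nhds_preimageOmitsSector hf.1 hσ hσ₀ (hS.2.1 u hu)
    obtain ⟨p, hpC, hpM⟩ : ∃ p ∈ connectedComponentIn Sᶜ w, M < ‖p‖ := by
      by_contra! hcon
      exact hunb (isBounded_iff_forall_norm_le.2 ⟨M, hcon⟩)
    have hp : PreimageOmitsSector f σ {p} :=
      PreimageOmitsSector.of_isPreconnected hnhds isPreconnected_connectedComponentIn
        (connectedComponentIn_subset _ _) (mem_connectedComponentIn hwS) hpC hw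
    obtain ⟨N, hN⟩ := hK.isBounded.exists_norm_le
    have hsphere : PreimageOmitsSector f σ (sphere 0 (max N (M + 1))) := by
      refine (isCompact_sphere (0 : ℂ) _).induction_on (p := PreimageOmitsSector f σ)
        ⟨1, one_pos, 1, one_pos, by simp⟩ (fun s t hst ht => ht.mono hst)
        (fun s t hs ht => hs.union ht) (fun x hx => ?_)
      have hxM : M < ‖x‖ := by
        rw [mem_sphere_zero_iff_norm.1 hx]
        exact lt_max_of_lt_right (lt_add_one M)
      obtain ⟨B, hBo, hxB, hB⟩ := hnhds x (hext hxM)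
      exact ⟨B, mem_nhdsWithin_of_mem_nhds (hBo.mem_nhds hxB), hB x hxB
        (hp.of_isPreconnected hnhds (isPreconnected_setOf_lt_norm_s15 hM) hext hpM hxM)⟩
    refine (hsphere.closedBall_of_sphere hf.1.continuous hσ hσ₀).mono fun x hx => ?_
    rw [mem_closedBall_zero_iff]
    exact (hN x hx).trans (le_max_left _ _)
end
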